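/- Every k-outerplanar graph has treewidth at most 3k − 1. -/

import Mathlib

open SimpleGraph

/-- A planar (straight-line) embedding of a graph in the plane: vertices are
mapped injectively to points, edges are drawn as straight segments (by Fáry's
theorem this is no loss of generality for simple planar graphs), distinct edges
meet only in common endpoints, and no vertex lies in the interior of an edge. -/
structure StraightEmbedding {V : Type} (G : SimpleGraph V) where
  pos : V → ℝ × ℝ
  inj : Function.Injective pos
  no_cross : ∀ a b c d : V, G.Adj a b → G.Adj c d → (s(a, b) : Sym2 V) ≠ s(c, d) →
    segment ℝ (pos a) (pos b) ∩ segment ℝ (pos c) (pos d) ⊆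
      pos '' (({a, b} : Set V) ∩ ({c, d} : Set V))
  vertex_off_edge : ∀ v a b : V, G.Adj a b → v ≠ a → v ≠ b →
    pos v ∉ segment ℝ (pos a) (pos b)

/-- A vertex lies on the outer (exterior) face of an embedding iff some ray
from it reaches infinity without crossing the drawing. -/
def OnOuterFace {V : Type} {G : SimpleGraph V} (emb : StraightEmbedding G) (v : V) : Prop :=
  ∃ d : ℝ × ℝ, d ≠ 0 ∧ ∀ t : ℝ, 0 < t → ∀ a b : V, G.Adj a b →
    emb.pos v + t • d ∉ segment ℝ (emb.pos a) (emb.pos b)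

/-- `IsKOuterplanar k V G`: `G` admits a `k`-outerplanar embedding. A
`1`-outerplanar embedding is planar with all vertices on the outer face; a
`k`-outerplanar embedding (`k ≥ 2`) is planar such that deleting the vertices
on the outer face leaves a `(k-1)`-outerplanar graph. -/
def IsKOuterplanar : ℕ → ∀ (V : Type), SimpleGraph V → Prop
  | 0, _, _ => False
  | 1, _, G => ∃ emb : StraightEmbedding G, ∀ v, OnOuterFace emb v
  | (k + 2), _, G => ∃ emb : StraightEmbedding G,
      IsKOuterplanar (k + 1) _ (G.induce {v | ¬ OnOuterFace emb v})

/-- A tree decomposition of `G` with index (node) type `ι`. -/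
structure TreeDecomp {V : Type} (G : SimpleGraph V) (ι : Type) where
  tree : SimpleGraph ι
  isTree : tree.IsTree
  bag : ι → Set V
  mem_bag : ∀ v : V, ∃ t, v ∈ bag t
  edge_bag : ∀ a b : V, G.Adj a b → ∃ t, a ∈ bag t ∧ b ∈ bag t
  coherence : ∀ v : V, (tree.induce {t | v ∈ bag t}).Connected

/-- `G` has treewidth at most `k`: some tree decomposition has all bags of
size at most `k + 1`. -/
def TreewidthLE {V : Type} (G : SimpleGraph V) (k : ℕ) : Prop :=
  ∃ (ι : Type) (D : TreeDecomp G ι), ∀ t, (D.bag t).ncard ≤ k + 1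

namespace KO

/-- `A` is nonempty and induces a connected subgraph of `H`. -/
def Conn {V : Type} (H : SimpleGraph V) (A : Set V) : Prop :=
  A.Nonempty ∧ ∀ T ⊆ A, T.Nonempty → (∀ x ∈ T, ∀ y ∈ A, H.Adj x y → y ∈ T) → A ⊆ T

/-- `C` is a connected component of the subgraph of `H` induced by `X`. -/
def IsComp {V : Type} (H : SimpleGraph V) (X C : Set V) : Prop :=
  Conn H C ∧ C ⊆ X ∧ ∀ u ∈ C, ∀ v ∈ X, H.Adj u v → v ∈ C

/-- Neighbours of `C` inside `Y`. -/
def nb {V : Type} (H : SimpleGraph V) (Y C : Set V) : Set V :=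
  {y | y ∈ Y ∧ y ∉ C ∧ ∃ x ∈ C, H.Adj x y}

/-- `W H n X B`: the vertices in `X` can be decomposed below a bag containing `B`. -/
inductive W {V : Type} (H : SimpleGraph V) (n : ℕ) : Set V → Set V → Prop
  | nil (B : Set V) : W H n ∅ B
  | intro (v : V) (X B : Set V) : v ∉ X → (insert v B).ncard ≤ n → W H n X (insert v B) →
      W H n (insert v X) B
  | mono (X B B' : Set V) : B' ⊆ B → (∀ x ∈ X, ∀ y ∈ B, H.Adj x y → y ∈ B') → W H n X B' →
      W H n X B
  | split (X Y B : Set V) : Disjoint X Y → (∀ x ∈ X, ∀ y ∈ Y, ¬ H.Adj x y) → W H n X B →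
      W H n Y B → W H n (X ∪ Y) B

section basics
variable {V : Type} {H : SimpleGraph V}

lemma ncard_pair_le2 (a b : V) : ({a, b} : Set V).ncard ≤ 2 :=
  (Set.ncard_insert_le _ _).trans (by rw [Set.ncard_singleton])

lemma mem_nb {Y C : Set V} {y : V} : y ∈ nb H Y C ↔ y ∈ Y ∧ y ∉ C ∧ ∃ x ∈ C, H.Adj x y := Iff.rfl

lemma Conn.singleton (v : V) : Conn H {v} := by
  refine ⟨⟨v, rfl⟩, ?_⟩
  intro T hT hne _
  obtain ⟨x, hx⟩ := hne
  have := hT hx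
  grind

lemma Conn.union_adj {A B : Set V} (hA : Conn H A) (hB : Conn H B) {a b : V} (ha : a ∈ A)
    (hb : b ∈ B) (hab : H.Adj a b) : Conn H (A ∪ B) := by
  refine ⟨hA.1.inl, ?_⟩
  intro T hT hne hcl
  have h1 : (T ∩ A).Nonempty → A ⊆ T := fun h => by
    have := hA.2 (T ∩ A) Set.inter_subset_right h (by grind)
    grind
  have h2 : (T ∩ B).Nonempty → B ⊆ T := fun h => by
    have := hB.2 (T ∩ B) Set.inter_subset_right h (by grind)
    grind
  have h3 : A ⊆ T → B ⊆ T := fun h => h2 ⟨b, hcl a (h ha) b (Or.inr hb) hab, hb⟩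
  have h4 : B ⊆ T → A ⊆ T := fun h => h1 ⟨a, hcl b (h hb) a (Or.inl ha) hab.symm, ha⟩
  obtain ⟨x, hx⟩ := hne
  rcases hT hx with h | h
  · have := h1 ⟨x, hx, h⟩
    grind
  · have := h2 ⟨x, hx, h⟩
    grind

lemma Conn.union_inter {A B : Set V} (hA : Conn H A) (hB : Conn H B) {a : V} (ha : a ∈ A)
    (hb : a ∈ B) : Conn H (A ∪ B) := by
  refine ⟨hA.1.inl, ?_⟩
  intro T hT hne hcl
  have h1 : (T ∩ A).Nonempty → A ⊆ T := fun h => by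
    have := hA.2 (T ∩ A) Set.inter_subset_right h (by grind)
    grind
  have h2 : (T ∩ B).Nonempty → B ⊆ T := fun h => by
    have := hB.2 (T ∩ B) Set.inter_subset_right h (by grind)
    grind
  have h3 : A ⊆ T → B ⊆ T := fun h => h2 ⟨a, h ha, hb⟩
  have h4 : B ⊆ T → A ⊆ T := fun h => h1 ⟨a, h hb, ha⟩
  obtain ⟨x, hx⟩ := hne
  rcases hT hx with h | h
  · have := h1 ⟨x, hx, h⟩
    grind
  · have := h2 ⟨x, hx, h⟩
    grind

lemma Conn.insert_adj {A : Set V} (hA : Conn H A) {a b : V} (ha : a ∈ A) (hab : H.Adj a b) :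
    Conn H (insert b A) := by
  have := hA.union_adj (Conn.singleton b) ha rfl hab
  rwa [Set.union_singleton] at this

/-- A connected set included in `X` and closed under an `X`-closed set meeting it. -/
lemma Conn.subset_of_closed {A C : Set V} (hA : Conn H A) (hm : (A ∩ C).Nonempty)
    (hC : ∀ u ∈ C, ∀ v ∈ A, H.Adj u v → v ∈ C) : A ⊆ C := by
  have := hA.2 (A ∩ C) Set.inter_subset_left hm (by grind)
  grind

lemma IsComp.conn {X C : Set V} (h : IsComp H X C) : Conn H C := h.1
lemma IsComp.sub {X C : Set V} (h : IsComp H X C) : C ⊆ X := h.2.1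
lemma IsComp.closed {X C : Set V} (h : IsComp H X C) : ∀ u ∈ C, ∀ v ∈ X, H.Adj u v → v ∈ C := h.2.2
lemma IsComp.ne {X C : Set V} (h : IsComp H X C) : C.Nonempty := h.1.1

lemma IsComp.conn_sub {X C A : Set V} (h : IsComp H X C) (hA : Conn H A) (hAX : A ⊆ X)
    {a : V} (ha : a ∈ A) (haC : a ∈ C) : A ⊆ C :=
  hA.subset_of_closed ⟨a, ha, haC⟩ (fun u hu v hv huv => h.closed u hu v (hAX hv) huv)

lemma IsComp.eq {X C D : Set V} (h : IsComp H X C) (h' : IsComp H X D) {a : V} (ha : a ∈ C)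
    (haC : a ∈ D) : C = D :=
  Set.Subset.antisymm (h'.conn_sub h.conn h.sub ha haC) (h.conn_sub h'.conn h'.sub haC ha)

lemma IsComp.disj {X C D : Set V} (h : IsComp H X C) (h' : IsComp H X D) (hne : C ≠ D) :
    Disjoint C D := by
  rw [Set.disjoint_left]
  intro a ha hb
  exact hne (h.eq h' ha hb)

lemma exists_comp {X : Set V} {x : V} (hx : x ∈ X) : ∃ C, IsComp H X C ∧ x ∈ C := by
  let C : Set V := {y | ∀ T ⊆ X, x ∈ T → (∀ u ∈ T, ∀ v ∈ X, H.Adj u v → v ∈ T) → y ∈ T}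
  have hxC : x ∈ C := fun T _ h _ => h
  have hCX : C ⊆ X := fun y hy => hy X subset_rfl hx (by grind)
  have hcl : ∀ u ∈ C, ∀ v ∈ X, H.Adj u v → v ∈ C := fun u hu v hv huv T hT hxT hT' =>
    hT' u (hu T hT hxT hT') v hv huv
  refine ⟨C, ⟨⟨⟨x, hxC⟩, ?_⟩, hCX, hcl⟩, hxC⟩
  intro T hT hne hTc
  by_cases hxT : x ∈ T
  · intro y hy
    exact hy T (hT.trans hCX) hxT (fun u hu v hv huv => hTc u hu v (hcl u (hT hu) v hv huv) huv)
  · exfalso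
    obtain ⟨z, hz⟩ := hne
    have := hT hz (C \ T) (by grind) ⟨hxC, hxT⟩ (by
      intro u hu v hv huv
      refine ⟨hcl u hu.1 v hv huv, fun hvT => hu.2 (hTc v hvT u hu.1 huv.symm)⟩)
    exact this.2 hz

lemma Conn.exists_adj {Y C : Set V} (hY : Conn H Y) (hC : C.Nonempty) (hCY : C ⊆ Y)
    (hne : (Y \ C).Nonempty) : ∃ x ∈ C, ∃ y ∈ Y \ C, H.Adj x y := by
  by_contra! hcon
  have := hY.2 C hCY hC (by grind)
  obtain ⟨z, hz⟩ := hne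
  exact hz.2 (this hz.1)

lemma IsComp.self {X : Set V} (h : Conn H X) : IsComp H X X := ⟨h, subset_rfl, by grind⟩

/-- attaching components -/
lemma Conn.union_comps {R X : Set V} (hR : Conn H R)
    (h : ∀ C, IsComp H X C → ∃ a ∈ R, ∃ b ∈ C, H.Adj a b) : Conn H (R ∪ X) := by
  refine ⟨hR.1.inl, ?_⟩
  intro T hT hne hcl
  have h1 : ∀ C, Conn H C → C ⊆ R ∪ X → (C ∩ T).Nonempty → C ⊆ T := fun C hC hs hm =>
    hC.subset_of_closed hm (fun u hu v hv huv => hcl u hu v (hs hv) huv)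
  have hRT : R ⊆ T := by
    obtain ⟨x, hx⟩ := hne
    rcases hT hx with hx' | hx'
    · exact h1 R hR (by grind) ⟨x, hx', hx⟩
    · obtain ⟨C, hC, hxC⟩ := exists_comp (H := H) hx'
      obtain ⟨a, ha, b, hb, hab⟩ := h C hC
      have h2 := h1 C hC.conn (hC.sub.trans Set.subset_union_right) ⟨x, hxC, hx⟩
      exact h1 R hR (by grind) ⟨a, ha, hcl b (h2 hb) a (Or.inl ha) hab.symm⟩
  refine Set.union_subset hRT ?_
  intro x hx
  obtain ⟨C, hC, hxC⟩ := exists_comp (H := H) hx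
  obtain ⟨a, ha, b, hb, hab⟩ := h C hC
  exact h1 C hC.conn (hC.sub.trans Set.subset_union_right)
    ⟨b, hb, hcl a (hRT ha) b (Or.inr (hC.sub hb)) hab⟩ hxC

lemma Conn.mono_graph {H' : SimpleGraph V} (hle : H ≤ H') {A : Set V} (hA : Conn H A) :
    Conn H' A :=
  ⟨hA.1, fun T hT hne hcl => hA.2 T hT hne (fun x hx y hy hxy => hcl x hx y hy (hle hxy))⟩

end basics

section Wlemmas
variable {V : Type} {H : SimpleGraph V}

lemma W.congr {n : ℕ} {X X' B B' : Set V} (h : W H n X B) (hX : X = X') (hB : B = B') :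
    W H n X' B' := by subst hX; subst hB; exact h

/-- restriction -/
lemma W.restrict [Finite V] {n : ℕ} {X B : Set V} (h : W H n X B) (U : Set V) :
    W H n (X ∩ U) (B ∩ U) := by
  induction h with
  | nil B => rw [Set.empty_inter]; exact W.nil _
  | intro v X B hv hc _ ih =>
    by_cases hvU : v ∈ U
    · rw [Set.insert_inter_of_mem hvU]
      rw [Set.insert_inter_of_mem hvU] at ih
      refine W.intro v _ _ (by grind) (le_trans (Set.ncard_le_ncard ?_) hc) ih
      grind
    · rw [Set.insert_inter_of_notMem hvU]
      rw [Set.insert_inter_of_notMem hvU] at ih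
      exact ih
  | mono X B B' hB hadj _ ih => exact W.mono _ _ (B' ∩ U) (by grind) (by grind) ih
  | split X Y B hd hn _ _ ih1 ih2 =>
    rw [Set.union_inter_distrib_right]
    exact W.split _ _ _ (hd.mono Set.inter_subset_left Set.inter_subset_left) (by grind) ih1 ih2

lemma W.antitone {H' : SimpleGraph V} {n : ℕ} {X B : Set V} (h : W H n X B) (hle : H' ≤ H) :
    W H' n X B := by
  induction h with
  | nil B => exact W.nil _
  | intro v X B hv hc _ ih => exact W.intro v X B hv hc ih
  | mono X B B' hB hadj _ ih =>
    exact W.mono _ _ B' hB (fun x hx y hy hxy => hadj x hx y hy (hle hxy)) ih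
  | split X Y B hd hn _ _ ih1 ih2 =>
    exact W.split _ _ _ hd (fun x hx y hy hxy => hn x hx y hy (hle hxy)) ih1 ih2

/-- replace graph by one agreeing on relevant adjacencies -/
lemma W.congr_graph {H' : SimpleGraph V} {n : ℕ} {X B : Set V} (h : W H n X B)
    (hle : ∀ x ∈ X, ∀ y ∈ X ∪ B, H'.Adj x y → H.Adj x y) : W H' n X B := by
  induction h with
  | nil B => exact W.nil _
  | intro v X B hv hc _ ih => exact W.intro v X B hv hc (ih (by grind))
  | mono X B B' hB hadj _ ih =>
    exact W.mono _ _ B' hB (fun x hx y hy hxy => hadj x hx y hy (hle x hx y (Or.inr hy) hxy))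
      (ih (by grind))
  | split X Y B hd hn _ _ ih1 ih2 =>
    exact W.split _ _ _ hd (fun x hx y hy hxy => hn x hx y hy (hle x (Or.inl hx) y (by grind) hxy))
      (ih1 (by grind)) (ih2 (by grind))

lemma W.apex [Finite V] {n k : ℕ} {X B Q : Set V} (h : W H n X B) (hQ : Q.ncard ≤ k) :
    W H (n + k) X (B ∪ Q) := by
  induction h with
  | nil B => exact W.nil _
  | intro v X B hv hc _ ih =>
    refine W.intro v X _ hv ?_ (ih.congr rfl (by rw [Set.insert_union]))
    rw [← Set.insert_union]
    exact (Set.ncard_union_le _ _).trans (by omega)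
  | mono X B B' hB hadj _ ih => exact W.mono _ _ (B' ∪ Q) (by grind) (by grind) ih
  | split X Y B hd hn _ _ ih1 ih2 => exact W.split _ _ _ hd hn ih1 ih2

lemma W.le [Finite V] {n m : ℕ} {X B : Set V} (h : W H n X B) (hnm : n ≤ m) : W H m X B := by
  have := h.apex (k := m - n) (Q := ∅) (by simp)
  rw [Nat.add_sub_cancel' hnm, Set.union_empty] at this
  exact this

/-- enlarge the hanging bag by vertices not adjacent to `X` -/
lemma W.weaken {n : ℕ} {X B B' : Set V} (h : W H n X B') (hB : B' ⊆ B)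
    (hadj : ∀ x ∈ X, ∀ y ∈ B, H.Adj x y → y ∈ B') : W H n X B := W.mono X B B' hB hadj h

/-- introduce a set of vertices at once -/
lemma W.intros [Finite V] {n : ℕ} {Z Q F : Set V} (h : W H n Z (Q ∪ F)) (hd : Disjoint Z F)
    (hc : (Q ∪ F).ncard ≤ n) : W H n (Z ∪ F) Q := by
  have key : ∀ F : Set V, F.Finite → ∀ Q, W H n Z (Q ∪ F) → Disjoint Z F → (Q ∪ F).ncard ≤ n →
      W H n (Z ∪ F) Q := by
    intro F hF
    induction F, hF using Set.Finite.induction_on with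
    | empty => intro Q h _ _; simpa using h
    | @insert a F ha _ ih =>
      intro Q h hd hc
      rw [Set.union_insert]
      have h1 : insert a Q ∪ F = Q ∪ insert a F := by grind
      refine W.intro a _ _ ?_ ?_ (ih (insert a Q) (by rwa [h1]) ?_ (by rwa [h1]))
      · have : a ∉ Z := fun h => Set.disjoint_left.1 hd h (Set.mem_insert _ _)
        grind
      · exact le_trans (Set.ncard_le_ncard (by grind)) hc
      · exact hd.mono_right (Set.subset_insert _ _)
  exact key F F.toFinite Q h hd hc

/-- union over components -/
lemma W.comps [Finite V] {n : ℕ} {X B : Set V} (h : ∀ D, IsComp H X D → W H n D B) :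
    W H n X B := by
  have key : ∀ m : ℕ, ∀ X : Set V, X.ncard ≤ m → (∀ D, IsComp H X D → W H n D B) →
      W H n X B := by
    intro m
    induction m with
    | zero =>
      intro X hX _
      have : X = ∅ := by
        rw [← Set.ncard_eq_zero]; omega
      rw [this]; exact W.nil _
    | succ m ih =>
      intro X hX hD
      rcases X.eq_empty_or_nonempty with rfl | ⟨x, hx⟩
      · exact W.nil _
      obtain ⟨C, hC, hxC⟩ := exists_comp (H := H) hx
      have hXe : X = C ∪ (X \ C) := by have := hC.sub; grind
      rw [hXe]
      refine W.split _ _ _ Set.disjoint_sdiff_right ?_ (hD C hC) (ih _ ?_ ?_)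
      · intro u hu v hv huv
        exact hv.2 (hC.closed u hu v hv.1 huv)
      · have : (X \ C).ncard < X.ncard := Set.ncard_lt_ncard (by
          constructor
          · grind
          · intro h; exact (h hx).2 hxC)
        omega
      · intro D hDc
        refine hD D ⟨hDc.conn, hDc.sub.trans Set.sdiff_subset, ?_⟩
        intro u hu v hv huv
        by_cases hvC : v ∈ C
        · exact absurd (hC.closed v hvC u (hDc.sub hu).1 huv.symm) (hDc.sub hu).2
        · exact hDc.closed u hu v ⟨hv, hvC⟩ huv
  exact key _ X le_rfl h

end Wlemmas
end KO
namespace KO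

section reroot
variable {V : Type} {H : SimpleGraph V}

lemma W.reroot_base [Finite V] {n : ℕ} {X B Z Q : Set V} (hX : W H n X B) (hZ : W H n Z B)
    (hXB : Disjoint X B) (hZX : Disjoint Z (X ∪ B)) (hadj : ∀ x ∈ X, ∀ z ∈ Z, ¬ H.Adj x z)
    (hB : B.ncard ≤ n) (hQ : Q ⊆ B) : W H n ((X ∪ B ∪ Z) \ Q) Q := by
  have hd : Disjoint X Z := (hZX.mono_right Set.subset_union_left).symm
  have hd2 : Disjoint Z B := hZX.mono_right Set.subset_union_right
  have h1 : W H n (X ∪ Z) B := W.split _ _ _ hd hadj hX hZ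
  have h2 : Q ∪ (B \ Q) = B := by grind
  have h3 : W H n (X ∪ Z ∪ (B \ Q)) Q := by
    apply W.intros
    · rwa [h2]
    · rw [Set.disjoint_left] at *
      grind
    · rwa [h2]
  refine h3.congr ?_ rfl
  rw [Set.disjoint_left] at *
  ext a
  grind

lemma W.reroot_aux [Finite V] {n : ℕ} {X B Q : Set V} (hX : W H n X B)
    (hcl : ∀ a ∈ Q, ∀ b ∈ Q, a ≠ b → H.Adj a b) :
    ∀ Z : Set V, W H n Z B → Disjoint X B → Disjoint Z (X ∪ B) →
    (∀ x ∈ X, ∀ z ∈ Z, ¬ H.Adj x z) → B.ncard ≤ n → Q ⊆ X ∪ B → W H n ((X ∪ B ∪ Z) \ Q) Q := by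
  induction hX with
  | nil B =>
    intro Z hZ hXB hZX hadj hB hQ
    exact W.reroot_base (W.nil _) hZ hXB hZX hadj hB (by simpa using hQ)
  | intro v X B hv hc _ ih =>
    intro Z hZ hXB hZX hadj hB hQ
    rw [Set.disjoint_left] at hXB hZX
    have := ih Z (hZ.weaken (Set.subset_insert _ _) (by
      intro z hz y hy hzy
      rcases hy with rfl | hy
      · exact absurd hzy.symm (hadj _ (Set.mem_insert _ _) z hz)
      · exact hy)) (by rw [Set.disjoint_left]; grind) (by rw [Set.disjoint_left]; grind)
      (by grind) hc (by grind)
    refine this.congr ?_ rfl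
    grind
  | mono X B B' hBB hadjB hXW ih =>
    intro Z hZ hXB hZX hadj hB hQ
    by_cases hQB : Q ⊆ B
    · exact W.reroot_base (W.mono X B B' hBB hadjB hXW) hZ hXB hZX hadj hB hQB
    obtain ⟨q, hq, hqB⟩ := Set.not_subset.1 hQB
    have hqX : q ∈ X := by have := hQ hq; grind
    have hQ' : Q ⊆ X ∪ B' := by
      intro a ha
      rcases hQ ha with h | h
      · exact Or.inl h
      · right
        exact hadjB q hqX a h (hcl q hq a ha (by grind))
    rw [Set.disjoint_left] at hXB hZX
    have h1 : W H n (Z ∪ (B \ B')) B' := by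
      have : B' ∪ (B \ B') = B := by grind
      apply W.intros
      · rwa [this]
      · rw [Set.disjoint_left]; grind
      · rwa [this]
    have := ih (Z ∪ (B \ B')) h1 (by rw [Set.disjoint_left]; grind)
      (by rw [Set.disjoint_left]; grind) (by grind)
      ((Set.ncard_le_ncard hBB).trans hB) hQ'
    refine this.congr ?_ rfl
    ext a
    grind
  | split X Y B hd hn hXW hYW ihX ihY =>
    intro Z hZ hXB hZX hadj hB hQ
    by_cases hQB : Q ⊆ B
    · exact W.reroot_base (W.split X Y B hd hn hXW hYW) hZ hXB hZX hadj hB hQB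
    obtain ⟨q, hq, hqB⟩ := Set.not_subset.1 hQB
    rw [Set.disjoint_left] at hXB hZX
    rw [Set.disjoint_left] at hd
    rcases hQ hq with (hqX | hqY) | h
    · have hQ' : Q ⊆ X ∪ B := by
        intro a ha
        rcases hQ ha with (h | h) | h
        · exact Or.inl h
        · exact absurd (hcl q hq a ha (by grind)) (hn q hqX a h)
        · exact Or.inr h
      have := ihX (Y ∪ Z) (W.split _ _ _ (by rw [Set.disjoint_left]; grind) (by grind) hYW hZ)
        (by rw [Set.disjoint_left]; grind) (by rw [Set.disjoint_left]; grind) (by grind) hB hQ'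
      refine this.congr ?_ rfl
      ext a
      grind
    · have hQ' : Q ⊆ Y ∪ B := by
        intro a ha
        rcases hQ ha with (h | h) | h
        · exact absurd (hcl a ha q hq (by grind)) (hn a h q hqY)
        · exact Or.inl h
        · exact Or.inr h
      have := ihY (X ∪ Z) (W.split _ _ _ (by rw [Set.disjoint_left]; grind) (by grind) hXW hZ)
        (by rw [Set.disjoint_left]; grind) (by rw [Set.disjoint_left]; grind)
        (by intro x hx z hz hxz
            rcases hz with hz | hz
            · exact hn z hz x hx hxz.symm
            · exact hadj x (Or.inr hx) z hz hxz) hB hQ'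
      refine this.congr ?_ rfl
      ext a
      grind
    · exact absurd h hqB

lemma W.reroot [Finite V] {n : ℕ} {U Q : Set V} (hX : W H n U ∅)
    (hcl : ∀ a ∈ Q, ∀ b ∈ Q, a ≠ b → H.Adj a b) (hQ : Q ⊆ U) : W H n (U \ Q) Q := by
  have := hX.reroot_aux hcl ∅ (W.nil _) (by simp) (by simp) (by simp) (by simp) (by simpa using hQ)
  simpa using this

lemma W.extract [Finite V] {n : ℕ} {X B : Set V} (h : W H n X B) (Y C : Set V) (hC : Conn H C) :
    Disjoint X B → C ⊆ X → nb H Y C ⊆ B →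
    ∃ v ∈ C, (insert v (nb H Y C)).ncard ≤ n ∧
      ∀ D, IsComp H (C \ {v}) D → W H n D (nb H Y D) := by
  induction h with
  | nil B =>
    intro _ hCX _
    obtain ⟨c, hc⟩ := hC.1
    exact absurd (hCX hc) (by simp)
  | intro v X B hv hc hW ih =>
    intro hd hCX hnb
    rw [Set.disjoint_left] at hd
    by_cases hvC : v ∈ C
    · refine ⟨v, hvC, (Set.ncard_le_ncard (Set.insert_subset_insert hnb)).trans hc, ?_⟩
      intro D hD
      have hDC := hD.sub
      have hnbD : nb H Y D ⊆ insert v B := by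
        intro y hy
        obtain ⟨hyY, hyD, x, hx, hxy⟩ := hy
        by_cases hyv : y = v
        · exact Or.inl hyv
        right
        by_cases hyC : y ∈ C
        · exact absurd (hD.closed x hx y ⟨hyC, hyv⟩ hxy) hyD
        · exact hnb ⟨hyY, hyC, x, (hDC hx).1, hxy⟩
      have hnn : ∀ y ∈ nb H Y D, y ∉ D := fun y hy => hy.2.1
      refine (hW.restrict (D ∪ nb H Y D)).congr ?_ ?_
      · ext a; grind
      · ext a; grind
    · exact ih (by rw [Set.disjoint_left]; grind) (by grind) (by grind)
  | mono X B B' hBB hadjB hXW ih =>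
    intro hd hCX hnb
    refine ih (hd.mono_right hBB) hCX ?_
    intro y hy
    obtain ⟨x, hx, hxy⟩ := hy.2.2
    exact hadjB x (hCX hx) y (hnb hy) hxy
  | split X Z B hd hn hXW hYW ihX ihY =>
    intro hd' hCX hnb
    by_cases hCX' : (C ∩ X).Nonempty
    · have hs : C ⊆ X := hC.subset_of_closed hCX' (by grind)
      exact ihX (hd'.mono_left Set.subset_union_left) hs hnb
    · have hs : C ⊆ Z := by
        intro a ha
        rcases hCX ha with h | h
        · exact absurd ⟨a, ha, h⟩ hCX'
        · exact h
      exact ihY (hd'.mono_left Set.subset_union_right) hs hnb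

lemma W.map_induce {G : SimpleGraph V} {s : Set V} {n : ℕ} {X B : Set s}
    (h : W (G.induce s) n X B) : W G n (Subtype.val '' X) (Subtype.val '' B) := by
  induction h with
  | nil B => rw [Set.image_empty]; exact W.nil _
  | intro v X B hv hc _ ih =>
    rw [Set.image_insert_eq] at ih ⊢
    refine W.intro _ _ _ ?_ ?_ ih
    · rintro ⟨a, ha, hav⟩
      exact hv (Subtype.ext hav ▸ ha)
    · rw [← Set.image_insert_eq, Set.ncard_image_of_injective _ Subtype.val_injective]
      exact hc
  | mono X B B' hB hadj _ ih =>
    refine W.mono _ _ _ (Set.image_mono hB) ?_ ih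
    rintro _ ⟨x, hx, rfl⟩ _ ⟨y, hy, rfl⟩ hxy
    exact ⟨y, hadj x hx y hy hxy, rfl⟩
  | split X Y B hd hn _ _ ih1 ih2 =>
    rw [Set.image_union]
    refine W.split _ _ _ ((Set.disjoint_image_iff Subtype.val_injective).2 hd) ?_ ih1 ih2
    rintro _ ⟨x, hx, rfl⟩ _ ⟨y, hy, rfl⟩ hxy
    exact hn x hx y hy hxy

end reroot

section treedec
variable {V : Type}

/-- A tree with node set `{i | i < m}` and coherent bags. -/
def GoodTree (m : ℕ) (T : SimpleGraph ℕ) (bag : ℕ → Set V) : Prop :=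
  T.IsAcyclic ∧ (∀ i j, T.Adj i j → i < m ∧ j < m) ∧ Conn T {i | i < m} ∧
    ∀ v, (∃ i < m, v ∈ bag i) → Conn T {i | i < m ∧ v ∈ bag i}

lemma GoodTree.leaf {m : ℕ} {T : SimpleGraph ℕ} {bag : ℕ → Set V} (h : GoodTree m T bag)
    {p : ℕ} (hp : p < m) (B : Set V) (hB : ∀ v ∈ B, ∀ i < m, v ∈ bag i → v ∈ bag p) :
    ∃ T', GoodTree (m + 1) T' (Function.update bag m B) := by
  obtain ⟨hac, hsup, hcon, hcoh⟩ := h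
  have hpm : p ≠ m := hp.ne
  have hadj : (T ⊔ edge p m).Adj p m := by
    rw [sup_adj, edge_adj]; grind
  have hle : T ≤ T ⊔ edge p m := le_sup_left
  refine ⟨T ⊔ edge p m, hac.sup_edge_of_not_reachable ?_, ?_, ?_, ?_⟩
  · rintro ⟨w⟩
    have : ¬ w.Nil := fun hn => hpm hn.eq
    have h1 := (hsup _ _ (w.adj_penultimate this)).2
    omega
  · intro i j hij
    rw [sup_adj, edge_adj] at hij
    rcases hij with hij | hij
    · have := hsup i j hij; omega
    · omega
  · have := (hcon.mono_graph hle).insert_adj hp hadj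
    convert this using 1
    ext i; simp; omega
  · intro v hv
    by_cases hvB : v ∈ B
    · by_cases hvo : ∃ i < m, v ∈ bag i
      · obtain ⟨i, hi, hvi⟩ := hvo
        have hvp := hB v hvB i hi hvi
        have := ((hcoh v ⟨i, hi, hvi⟩).mono_graph hle).insert_adj (a := p) ⟨hp, hvp⟩ hadj
        convert this using 1
        ext j
        by_cases hj : j = m
        · subst hj; simp [hvB]
        · simp [hj]; intro _; omega
      · push Not at hvo
        convert Conn.singleton m using 1
        ext j
        by_cases hj : j = m
        · subst hj; simp [hvB]
        · simp [hj]; intro _; exact hvo j (by omega)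
    · obtain ⟨i, hi, hvi⟩ := hv
      have him : i ≠ m := by rintro rfl; simp at hvi; exact hvB hvi
      rw [Function.update_of_ne him] at hvi
      have := ((hcoh v ⟨i, by omega, hvi⟩).mono_graph hle)
      convert this using 1
      ext j
      by_cases hj : j = m
      · subst hj; simp [hvB]
      · simp [Function.update_of_ne hj]; intro _; omega

lemma W.realize {G : SimpleGraph V} {n : ℕ} {X B : Set V} (h : W G n X B) :
    ∀ (m : ℕ) (T : SimpleGraph ℕ) (bag : ℕ → Set V), GoodTree m T bag → ∀ p < m, B ⊆ bag p →
    (∀ x ∈ X, ∀ i < m, x ∉ bag i) →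
    ∃ (m' : ℕ) (T' : SimpleGraph ℕ) (bag' : ℕ → Set V), GoodTree m' T' bag' ∧ m ≤ m' ∧
      (∀ i < m, bag' i = bag i) ∧
      (∀ v, (∃ i < m', v ∈ bag' i) ↔ (∃ i < m, v ∈ bag i) ∨ v ∈ X) ∧
      (∀ i, m ≤ i → i < m' → (bag' i).ncard ≤ n) ∧
      (∀ x ∈ X, ∀ y ∈ X ∪ B, G.Adj x y → ∃ i < m', x ∈ bag' i ∧ y ∈ bag' i) := by
  induction h with
  | nil B =>
    intro m T bag hg p hp hB _
    exact ⟨m, T, bag, hg, le_rfl, fun _ _ => rfl, by simp, by intros; omega, by simp⟩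
  | intro v X B hv hc _ ih =>
    intro m T bag hg p hp hB hX
    obtain ⟨T1, hT1⟩ := hg.leaf hp (insert v B) (by grind)
    obtain ⟨m', T', bag', hg', hm, hb, hcov, hsz, he⟩ := ih (m + 1) T1 _ hT1 m (by omega)
      (by simp) (by
        intro x hx i hi hxi
        by_cases him : i = m
        · subst him
          rw [Function.update_self] at hxi
          have := hX x (Or.inr hx) p hp
          grind
        · rw [Function.update_of_ne him] at hxi
          exact hX x (Or.inr hx) i (by omega) hxi)
    have hbm : bag' m = insert v B := by rw [hb m (by omega)]; simp
    have hbo : ∀ i < m, bag' i = bag i := fun i hi => by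
      rw [hb i (by omega), Function.update_of_ne (by omega)]
    refine ⟨m', T', bag', hg', by omega, hbo, ?_, ?_, ?_⟩
    · intro u
      rw [hcov u]
      constructor
      · rintro (⟨i, hi, hui⟩ | hu)
        · by_cases him : i = m
          · subst him
            rw [Function.update_self] at hui
            rcases hui with rfl | hui
            · right; simp
            · left; exact ⟨p, hp, hB hui⟩
          · rw [Function.update_of_ne him] at hui
            left; exact ⟨i, by omega, hui⟩
        · right; exact Or.inr hu
      · rintro (⟨i, hi, hui⟩ | rfl | hu)
        · left; exact ⟨i, by omega, by rwa [Function.update_of_ne (by omega)]⟩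
        · left; exact ⟨m, by omega, by simp⟩
        · right; exact hu
    · intro i hi hi'
      by_cases him : i = m
      · subst him; rw [hbm]; exact hc
      · exact hsz i (by omega) hi'
    · intro x hx y hy hxy
      by_cases hxX : x ∈ X
      · exact he x hxX y (by grind) hxy
      · have hxv : x = v := by grind
        subst hxv
        by_cases hyX : y ∈ X
        · obtain ⟨i, hi, h1, h2⟩ := he y hyX x (by simp) hxy.symm
          exact ⟨i, hi, h2, h1⟩
        · have : y ≠ x := hxy.ne'
          exact ⟨m, by omega, by rw [hbm]; grind⟩
  | mono X B B' hBB hadjB _ ih =>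
    intro m T bag hg p hp hB hX
    obtain ⟨m', T', bag', hg', hm, hb, hcov, hsz, he⟩ := ih m T bag hg p hp (hBB.trans hB) hX
    refine ⟨m', T', bag', hg', hm, hb, hcov, hsz, ?_⟩
    intro x hx y hy hxy
    refine he x hx y ?_ hxy
    rcases hy with hy | hy
    · exact Or.inl hy
    · exact Or.inr (hadjB x hx y hy hxy)
  | split X Y B hd hn _ _ ih1 ih2 =>
    intro m T bag hg p hp hB hX
    rw [Set.disjoint_left] at hd
    obtain ⟨m1, T1, bag1, hg1, hm1, hb1, hcov1, hsz1, he1⟩ := ih1 m T bag hg p hp hB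
      (fun x hx => hX x (Or.inl hx))
    obtain ⟨m2, T2, bag2, hg2, hm2, hb2, hcov2, hsz2, he2⟩ := ih2 m1 T1 bag1 hg1 p (by omega)
      (by rw [hb1 p hp]; exact hB) (by
        intro y hy i hi hyi
        rcases (hcov1 y).1 ⟨i, hi, hyi⟩ with ⟨j, hj, hyj⟩ | h
        · exact hX y (Or.inr hy) j hj hyj
        · exact hd h hy)
    refine ⟨m2, T2, bag2, hg2, by omega, ?_, ?_, ?_, ?_⟩
    · intro i hi; rw [hb2 i (by omega), hb1 i hi]
    · intro v; rw [hcov2, hcov1, or_assoc]; rfl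
    · intro i hi hi2
      by_cases h : i < m1
      · rw [hb2 i h]; exact hsz1 i hi h
      · exact hsz2 i (by omega) hi2
    · intro x hx y hy hxy
      rcases hx with hx | hx
      · obtain ⟨i, hi, h1, h2⟩ := he1 x hx y (by
          have := hn x hx y
          grind) hxy
        exact ⟨i, by omega, by rw [hb2 i hi]; exact ⟨h1, h2⟩⟩
      · exact he2 x hx y (by
          have := fun h => hn y h x hx hxy.symm
          grind) hxy

lemma Conn.connected {ι : Type} {T : SimpleGraph ℕ} {A : Set ℕ} (h : Conn T A)
    (K : SimpleGraph ι) (f : ι → ℕ) (hf : Function.Injective f) (hr : Set.range f = A)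
    (hK : ∀ x y, T.Adj (f x) (f y) → K.Adj x y) : K.Connected := by
  obtain ⟨a, ha⟩ := h.1
  rw [← hr] at ha
  obtain ⟨x, rfl⟩ := ha
  have hx : ∀ y, K.Reachable x y := by
    intro y
    have := h.2 (f '' {y | K.Reachable x y}) (by rw [← hr]; exact Set.image_subset_range _ _)
      ⟨f x, x, Reachable.refl _, rfl⟩ (by
        rintro _ ⟨u, hu, rfl⟩ v hv huv
        rw [← hr] at hv
        obtain ⟨w, rfl⟩ := hv
        exact ⟨w, Reachable.trans hu (hK u w huv).reachable, rfl⟩)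
    obtain ⟨z, hz, hzy⟩ := this (by rw [← hr]; exact ⟨y, rfl⟩ : f y ∈ A)
    rw [← hf hzy]; exact hz
  have : Nonempty ι := ⟨x⟩
  exact Connected.mk (fun a b => (hx a).symm.trans (hx b))

lemma W.treewidth {G : SimpleGraph V} {n : ℕ} (h : W G n Set.univ ∅) :
    ∃ (ι : Type) (D : TreeDecomp G ι), ∀ t, (D.bag t).ncard ≤ n := by
  have hg : GoodTree (V := V) 1 ⊥ (fun _ => ∅) := by
    refine ⟨isAcyclic_bot, by simp, ?_, by simp⟩
    convert Conn.singleton 0 using 1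
    ext i; simp
  obtain ⟨m, T, bag, ⟨hac, hsup, hcon, hcoh⟩, hm, hb, hcov, hsz, he⟩ :=
    h.realize 1 ⊥ (fun _ => ∅) hg 0 (by omega) (by simp) (by simp)
  refine ⟨{i | i < m}, ⟨T.induce {i | i < m}, ⟨?_, hac.induce _⟩, fun t => bag t.1, ?_, ?_, ?_⟩, ?_⟩
  · exact hcon.connected _ Subtype.val Subtype.val_injective Subtype.range_val (fun x y hxy => hxy)
  · intro v
    obtain ⟨i, hi, hvi⟩ := (hcov v).2 (Or.inr trivial)
    exact ⟨⟨i, hi⟩, hvi⟩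
  · intro a b hab
    obtain ⟨i, hi, h1, h2⟩ := he a trivial b (Or.inl trivial) hab
    exact ⟨⟨i, hi⟩, h1, h2⟩
  · intro v
    refine (hcoh v ((hcov v).2 (Or.inr trivial))).connected _ (fun t => t.1.1)
      (fun x y hxy => Subtype.ext (Subtype.ext hxy)) ?_ (fun x y hxy => hxy)
    ext i
    constructor
    · rintro ⟨⟨⟨j, hj⟩, hvj⟩, rfl⟩
      exact ⟨hj, hvj⟩
    · rintro ⟨hi, hvi⟩
      exact ⟨⟨⟨i, hi⟩, hvi⟩, rfl⟩
  · rintro ⟨i, hi⟩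
    change (bag i).ncard ≤ n
    by_cases h0 : i < 1
    · rw [hb i h0]; simp
    · exact hsz i (by omega) hi

end treedec
end KO
namespace KO

section GK
variable {V : Type} {H : SimpleGraph V}

/-- `L` is an admissible bag content for decomposing `C`. -/
def Valid (H : SimpleGraph V) (n : ℕ) (Y C L : Set V) : Prop :=
  L ⊆ C ∧ L.Nonempty ∧ (nb H Y C ∪ L).ncard ≤ n ∧ ∀ D, IsComp H (C \ L) D → W H n D (nb H Y D)

lemma Valid.loc [Finite V] {n : ℕ} {Y C L X : Set V} (h : Valid H n Y C L) (hCY : C ⊆ Y)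
    (hX : X ⊆ C) (hnb : nb H Y X ⊆ nb H Y C ∪ L) : W H n X (nb H Y X) := by
  obtain ⟨hLC, hne, hcard, hW⟩ := h
  have hS : ∀ y ∈ nb H Y C, y ∉ C := fun y hy => hy.2.1
  have hcomp : ∀ D, IsComp H (X \ L) D → W H n D (nb H Y X ∪ (X ∩ L)) := by
    intro D hD
    have hDX := hD.sub
    have hDc : IsComp H (C \ L) D := by
      refine ⟨hD.conn, by grind, ?_⟩
      intro u hu v hv huv
      by_cases hvX : v ∈ X
      · exact hD.closed u hu v ⟨hvX, hv.2⟩ huv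
      · have : v ∈ nb H Y X := ⟨hCY hv.1, hvX, u, (hDX hu).1, huv⟩
        have := hnb this
        grind
    refine (hW D hDc).weaken ?_ ?_
    · intro y hy
      obtain ⟨hyY, hyD, x, hx, hxy⟩ := hy
      by_cases hyX : y ∈ X
      · right
        refine ⟨hyX, ?_⟩
        by_contra hyL
        exact hyD (hD.closed x hx y ⟨hyX, hyL⟩ hxy)
      · left
        exact ⟨hyY, hyX, x, (hDX hx).1, hxy⟩
    · intro x hx y hy hxy
      rcases hy with hy | hy
      · exact ⟨hy.1, fun h => hy.2.1 (hDX h).1, x, hx, hxy⟩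
      · exact ⟨hCY (hX hy.1), fun h => (hDX h).2 hy.2, x, hx, hxy⟩
  have h1 := W.comps hcomp
  have h2 := h1.intros (by rw [Set.disjoint_left]; grind)
    ((Set.ncard_le_ncard (by grind)).trans hcard)
  refine h2.congr ?_ rfl
  ext a; grind

lemma Valid.subset [Finite V] {n : ℕ} {Y C L L' : Set V} (h : Valid H n Y C L) (hCY : C ⊆ Y)
    (hL : L' ⊆ L) (hne : L'.Nonempty) : Valid H n Y C L' := by
  refine ⟨hL.trans h.1, hne, (Set.ncard_le_ncard (by grind)).trans h.2.2.1, ?_⟩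
  intro D hD
  refine h.loc hCY (hD.sub.trans Set.sdiff_subset) ?_
  intro y hy
  obtain ⟨hyY, hyD, x, hx, hxy⟩ := hy
  have hxC := (hD.sub hx).1
  by_cases hyC : y ∈ C
  · right
    by_contra hyL
    exact hyD (hD.closed x hx y ⟨hyC, fun h => hyL (hL h)⟩ hxy)
  · exact Or.inl ⟨hyY, hyC, x, hxC, hxy⟩

lemma exists_typeA [Finite V] {n : ℕ} {Y C : Set V} (hCY : C ⊆ Y) {M : Set V}
    (hM : M = {x | x ∈ C ∧ ∃ s ∈ nb H Y C, H.Adj x s}) (hMne : M.Nonempty) (m : ℕ) :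
    ∀ L, Valid H n Y C L → ∀ D, IsComp H (C \ L) D → M ⊆ D → D.ncard ≤ m →
    ∃ L', Valid H n Y C L' ∧ ∀ D, IsComp H (C \ L') D → ¬ M ⊆ D := by
  induction m with
  | zero =>
    intro L _ D hD _ hc
    have : D = ∅ := by rw [← Set.ncard_eq_zero]; omega
    exact absurd hD.ne (by simp [this])
  | succ m ih =>
    intro L hL D hD hMD hc
    have hDC := hD.sub
    have hnD : ∀ y ∈ nb H Y D, y ∉ D := fun y hy => hy.2.1
    obtain ⟨v, hvD, hcard, hcomp⟩ := (hL.2.2.2 D hD).extract Y D hD.conn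
      (by rw [Set.disjoint_left]; grind) subset_rfl subset_rfl
    have hSD : nb H Y C ⊆ nb H Y D := by
      intro s hs
      obtain ⟨hsY, hsC, x, hx, hxs⟩ := id hs
      have hxM : x ∈ M := by rw [hM]; exact ⟨hx, s, hs, hxs⟩
      exact ⟨hsY, fun h => hsC (hDC h).1, x, hMD hxM, hxs⟩
    have hnbDL : ∀ y ∈ nb H Y D, y ∈ C → y ∈ L := by
      intro y hy hyC
      obtain ⟨hyY, hyD, x, hx, hxy⟩ := hy
      by_contra hyL
      exact hyD (hD.closed x hx y ⟨hyC, hyL⟩ hxy)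
    set L' : Set V := insert v (nb H Y D ∩ C) with hL'
    have hmeet : ∀ E, IsComp H (C \ L') E → (E ∩ D).Nonempty → E ⊆ D \ {v} := by
      intro E hE hm
      have h1 : E ⊆ D := by
        refine hE.conn.subset_of_closed hm ?_
        intro u hu w hw huw
        by_contra hwD
        have h2 := hE.sub hw
        exact h2.2 (Or.inr ⟨⟨hCY h2.1, hwD, u, hu, huw⟩, h2.1⟩)
      intro x hx
      refine ⟨h1 hx, ?_⟩
      rintro rfl
      exact (hE.sub hx).2 (Or.inl rfl)
    have hL'v : Valid H n Y C L' := by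
      refine ⟨?_, ⟨v, Or.inl rfl⟩, (Set.ncard_le_ncard ?_).trans hcard, ?_⟩
      · grind
      · grind
      · intro E hE
        by_cases hm : (E ∩ D).Nonempty
        · have hED := hmeet E hE hm
          refine hcomp E ⟨hE.conn, hED, ?_⟩
          intro u hu w hw huw
          refine hE.closed u hu w ⟨(hDC hw.1).1, ?_⟩ huw
          grind
        · have hEC := hE.sub
          have hdis : ∀ x ∈ E, x ∉ D := fun x hx hxD => hm ⟨x, hx, hxD⟩
          refine hL.loc hCY (by grind) ?_
          intro y hy
          obtain ⟨hyY, hyE, x, hx, hxy⟩ := hy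
          by_cases hyC : y ∈ C
          · right
            have hyL' : y ∈ L' := by
              by_contra h
              exact hyE (hE.closed x hx y ⟨hyC, h⟩ hxy)
            rcases hyL' with rfl | h
            · exfalso
              exact (hEC hx).2 (Or.inr ⟨⟨hCY (hEC hx).1, hdis x hx, y, hvD, hxy.symm⟩, (hEC hx).1⟩)
            · exact hnbDL y h.1 h.2
          · exact Or.inl ⟨hyY, hyC, x, (hEC hx).1, hxy⟩
    by_cases hA : ∀ D, IsComp H (C \ L') D → ¬ M ⊆ D
    · exact ⟨L', hL'v, hA⟩
    · push Not at hA
      obtain ⟨E, hE, hME⟩ := hA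
      obtain ⟨z, hz⟩ := hMne
      have hED := hmeet E hE ⟨z, hME hz, hMD hz⟩
      refine ih L' hL'v E hE hME ?_
      have : E.ncard < D.ncard := Set.ncard_lt_ncard ⟨by grind, fun h => (hED (h hvD)).2 rfl⟩
      omega

lemma good_K [Finite V] {n : ℕ} {Y C : Set V} (hCY : C ⊆ Y) (hC : Conn H C)
    (hR : Conn H (Y \ C)) (hS : (nb H Y C).Nonempty) (hW : W H n C (nb H Y C)) :
    ∃ L ⊆ C, L.Nonempty ∧ (nb H Y C ∪ L).ncard ≤ n ∧
      ∀ D, IsComp H (C \ L) D → W H n D (nb H Y D) ∧ Conn H (Y \ D) := by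
  have hSC : ∀ y ∈ nb H Y C, y ∉ C := fun y hy => hy.2.1
  obtain ⟨M, hM⟩ : ∃ M, M = {x | x ∈ C ∧ ∃ s ∈ nb H Y C, H.Adj x s} := ⟨_, rfl⟩
  have hMne : M.Nonempty := by
    obtain ⟨s, hs⟩ := hS
    obtain ⟨_, _, x, hx, hxs⟩ := id hs
    exact ⟨x, by rw [hM]; exact ⟨hx, s, hs, hxs⟩⟩
  have hex : ∃ L', Valid H n Y C L' ∧ ∀ D, IsComp H (C \ L') D → ¬ M ⊆ D := by
    obtain ⟨v, hv, hc, hcomp⟩ := hW.extract Y C hC (by rw [Set.disjoint_left]; grind) subset_rfl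
      subset_rfl
    have hval : Valid H n Y C {v} := ⟨by simpa using hv, ⟨v, rfl⟩, by
      rwa [Set.union_singleton], hcomp⟩
    by_cases hA : ∀ D, IsComp H (C \ {v}) D → ¬ M ⊆ D
    · exact ⟨_, hval, hA⟩
    · push Not at hA
      obtain ⟨D, hD, hMD⟩ := hA
      exact exists_typeA hCY hM hMne _ _ hval D hD hMD le_rfl
  obtain ⟨L, ⟨hL, hA⟩, hmin⟩ : ∃ L, (Valid H n Y C L ∧ ∀ D, IsComp H (C \ L) D → ¬ M ⊆ D) ∧
      ∀ L', (Valid H n Y C L' ∧ ∀ D, IsComp H (C \ L') D → ¬ M ⊆ D) → L.ncard ≤ L'.ncard := by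
    obtain ⟨L, hL, hmin⟩ := (measure (fun L : Set V => L.ncard)).wf.has_min
      {L | Valid H n Y C L ∧ ∀ D, IsComp H (C \ L) D → ¬ M ⊆ D} hex
    exact ⟨L, hL, fun L' h => not_lt.1 (hmin L' h)⟩
  refine ⟨L, hL.1, hL.2.1, hL.2.2.1, fun D hD => ⟨hL.2.2.2 D hD, ?_⟩⟩
  have hDC := hD.sub
  have hYD : Y \ D = (Y \ C) ∪ (C \ D) := by grind
  rw [hYD]
  refine hR.union_comps ?_
  intro E hE
  have hEC := hE.sub
  suffices h : (E ∩ M).Nonempty by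
    obtain ⟨x, hxE, hxM⟩ := h
    rw [hM] at hxM
    obtain ⟨_, s, hs, hxs⟩ := hxM
    exact ⟨s, ⟨hs.1, hs.2.1⟩, x, hxE, hxs.symm⟩
  by_contra hEM
  have hEM' : ∀ x ∈ E, x ∉ M := fun x hx hxM => hEM ⟨x, hx, hxM⟩
  have hlem : ∀ F ⊆ C \ (L \ E), Conn H F → (F ∩ (D ∪ E)).Nonempty → F ⊆ D ∪ E := by
    intro F hF hFc hm
    refine hFc.subset_of_closed hm ?_
    intro u hu w hw huw
    by_contra hcon
    have hwF := hF hw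
    rcases hu with hu | hu
    · exact hcon (Or.inl (hD.closed u hu w (by grind) huw))
    · exact hcon (Or.inr (hE.closed u hu w (by grind) huw))
  obtain ⟨d, hd⟩ := hD.ne
  have hne' : (L \ E).Nonempty := by
    by_contra h
    rw [Set.not_nonempty_iff_eq_empty] at h
    have h1 := hlem C (by rw [h]; simp) hC ⟨d, (hDC hd).1, Or.inl hd⟩
    refine hA D hD ?_
    intro x hx
    have : x ∈ C := by rw [hM] at hx; exact hx.1
    have := h1 this
    grind
  have hsm : (L \ E).ncard < L.ncard := by
    obtain ⟨x, hx, y, hy, hxy⟩ := hC.exists_adj hE.ne (by grind) ⟨d, (hDC hd).1, by grind⟩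
    have hyD : y ∈ D := by
      by_contra h
      exact hy.2 (hE.closed x hx y ⟨hy.1, h⟩ hxy)
    have hxL : x ∈ L := by
      by_contra h
      exact (hEC hx).2 (hD.closed y hyD x ⟨(hEC hx).1, h⟩ hxy.symm)
    exact Set.ncard_lt_ncard ⟨Set.sdiff_subset, fun h => (h hxL).2 hx⟩
  have := hmin (L \ E) ⟨hL.subset hCY Set.sdiff_subset hne', ?_⟩
  · omega
  intro F hF hMF
  by_cases hm : (F ∩ (D ∪ E)).Nonempty
  · have h1 := hlem F hF.sub hF.conn hm
    refine hA D hD ?_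
    intro x hx
    have := h1 (hMF hx)
    grind
  · have hdis : ∀ x ∈ F, x ∉ E := fun x hx hxE => hm ⟨x, hx, Or.inr hxE⟩
    have hFs := hF.sub
    refine hA F ⟨hF.conn, by grind, ?_⟩ hMF
    intro u hu v hv huv
    exact hF.closed u hu v (by grind) huv

end GK
end KO
namespace KO

section INT

/-- index `x` represents a vertex of the cyclic interval `[i,j]` (where `0` and `N` agree). -/
def Inn (N i j x : ℕ) : Prop := (i ≤ x ∧ x ≤ j) ∨ (x = 0 ∧ j = N) ∨ (x = N ∧ i = 0)

/-- boundary condition for intervals touching `0` or `N` -/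
def CondC (N i j : ℕ) (Q : ℕ → Prop) : Prop :=
  (i = 0 → j = N ∨ ∃ y, j ≤ y ∧ y < N ∧ Q y) ∧ (j = N → i = 0 ∨ ∃ y, 0 < y ∧ y ≤ i ∧ Q y)

/-- no alternation -/
def NoAlt (N : ℕ) (P Q : ℕ → Prop) : Prop :=
  ∀ a b c d, a < b → b < c → c < d → d ≤ N → ¬ (a = 0 ∧ d = N) → P a → Q b → P c → Q d → False

lemma int_triple {N : ℕ} (hN : 4 ≤ N) {P Q : ℕ → Prop} (hPQ : ∀ x ≤ N, P x ∨ Q x)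
    (h1 : NoAlt N P Q) (h2 : NoAlt N Q P) (hP0 : P N) (hQ0 : Q N)
    {b c : ℕ} (hb : 0 < b) (hbc : b < c) (hc : c < N) (hPb : P b) (hQb : Q b) (hPc : P c)
    (hQc : Q c) : False := by
  obtain ⟨w, hw0, hwN, hwb, hwc⟩ : ∃ w, 0 < w ∧ w < N ∧ w ≠ b ∧ w ≠ c := by
    by_cases h1 : 1 ≠ b ∧ 1 ≠ c
    · exact ⟨1, by omega, by omega, h1.1, h1.2⟩
    by_cases h2 : 2 ≠ b ∧ 2 ≠ c
    · exact ⟨2, by omega, by omega, h2.1, h2.2⟩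
    exact ⟨3, by omega, by omega, by omega, by omega⟩
  have key : ∀ P Q : ℕ → Prop, NoAlt N P Q → NoAlt N Q P → P N → Q N → P b → Q b → P c → Q c →
      P w → False := by
    intro P Q h1 h2 hP0 hQ0 hPb hQb hPc hQc hw
    rcases lt_or_gt_of_ne hwb with h | h
    · exact h1 w b c N h hbc hc le_rfl (by omega) hw hQb hPc hQ0
    · rcases lt_or_gt_of_ne hwc with h' | h'
      · exact h2 b w c N h h' hc le_rfl (by omega) hQb hw hQc hP0
      · exact h1 b c w N hbc h' hwN le_rfl (by omega) hPb hQc hw hQ0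
  rcases hPQ w hwN.le with h | h
  · exact key P Q h1 h2 hP0 hQ0 hPb hQb hPc hQc h
  · exact key Q P h2 h1 hQ0 hP0 hQb hPb hQc hPc h

lemma exists_min_max {i j : ℕ} (P : ℕ → Prop) (h : ∃ x, i ≤ x ∧ x ≤ j ∧ P x) :
    ∃ s t, i ≤ s ∧ s ≤ t ∧ t ≤ j ∧ P s ∧ P t ∧ ∀ x, i ≤ x → x ≤ j → P x → s ≤ x ∧ x ≤ t := by
  classical
  obtain ⟨x, hx⟩ := h
  let F := (Finset.Icc i j).filter P
  have hF : F.Nonempty := ⟨x, by simp [F, hx]⟩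
  have hmin := F.min'_mem hF
  have hmax := F.max'_mem hF
  simp only [F, Finset.mem_filter, Finset.mem_Icc] at hmin hmax
  refine ⟨F.min' hF, F.max' hF, hmin.1.1, F.min'_le_max' hF, hmax.1.2, hmin.2, hmax.2, ?_⟩
  intro y h1 h2 h3
  have hy : y ∈ F := by simp [F, h1, h2, h3]
  exact ⟨F.min'_le y hy, F.le_max' y hy⟩

lemma int_lemma {N : ℕ} (hN : 4 ≤ N) {P Q : ℕ → Prop} (hQ0 : Q 0) (hP : P 0 ↔ P N)
    (hQ : Q 0 ↔ Q N) (hPQ : ∀ x ≤ N, P x ∨ Q x) (h1 : NoAlt N P Q) (h2 : NoAlt N Q P)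
    {i j : ℕ} (hjN : j ≤ N) (hPin : ∀ x ≤ N, P x → Inn N i j x)
    (hinter : ∃ x, i < x ∧ x < j ∧ P x) (hcond : CondC N i j Q) :
    ∃ u t, i ≤ u ∧ u ≤ t ∧ t ≤ j ∧ (∀ x ≤ N, P x → Inn N u t x) ∧
      (∀ x, u < x → x < t → ¬ Q x) ∧ P u ∧ P t ∧ CondC N u t Q := by
  obtain ⟨x0, hx0i, hx0j, hx0P⟩ := hinter
  have hQN := hQ.1 hQ0
  by_cases hfull : i = 0 ∧ j = N
  · obtain ⟨rfl, rfl⟩ := hfull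
    obtain ⟨s, t, hs, hst, ht, hPs, hPt, hbd⟩ := exists_min_max (i := 1) (j := j - 1) P
      ⟨x0, by omega, by omega, hx0P⟩
    have hnoQ : ∀ x, s < x → x < t → ¬ Q x := fun x h h' hq =>
      h1 s x t j h h' (by omega) le_rfl (by omega) hPs hq hPt hQN
    by_cases hP0 : P 0
    · have hPN := hP.1 hP0
      by_cases hno : ∀ x, 0 < x → x < j → ¬ Q x
      · exact ⟨0, j, le_rfl, by omega, le_rfl, fun x hx _ => Or.inl ⟨by omega, hx⟩, hno, hP0, hPN,
          by simp [CondC]⟩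
      · push Not at hno
        obtain ⟨q, hq0, hqj, hqQ⟩ := hno
        by_cases hr : ∀ x, 0 < x → x < j → Q x → t ≤ x
        · refine ⟨0, t, le_rfl, by omega, by omega, ?_, ?_, hP0, hPt, ?_⟩
          · intro x hx hPx
            by_cases hx0 : x = 0
            · exact Or.inl ⟨by omega, by omega⟩
            by_cases hxj : x = j
            · exact Or.inr (Or.inr ⟨hxj, rfl⟩)
            · exact Or.inl ⟨by omega, (hbd x (by omega) (by omega) hPx).2⟩
          · intro x h h' hq
            have := hr x h (by omega) hq
            omega
          · exact ⟨fun _ => Or.inr ⟨q, hr q hq0 hqj hqQ, hqj, hqQ⟩, fun _ => Or.inl rfl⟩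
        by_cases hr' : ∀ x, 0 < x → x < j → Q x → x ≤ s
        · refine ⟨s, j, by omega, by omega, le_rfl, ?_, ?_, hPs, hPN, ?_⟩
          · intro x hx hPx
            by_cases hx0 : x = 0
            · exact Or.inr (Or.inl ⟨hx0, rfl⟩)
            by_cases hxj : x = j
            · exact Or.inl ⟨by omega, by omega⟩
            · exact Or.inl ⟨(hbd x (by omega) (by omega) hPx).1, by omega⟩
          · intro x h h' hq
            have := hr' x (by omega) (by omega) hq
            omega
          · exact ⟨fun _ => Or.inl rfl, fun _ => Or.inr ⟨q, hq0, hr' q hq0 hqj hqQ, hqQ⟩⟩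
        exfalso
        push Not at hr hr'
        obtain ⟨r, hr0, hrj, hrQ, hrt⟩ := hr
        obtain ⟨r', hr'0, hr'j, hr'Q, hr't⟩ := hr'
        have hrs : r ≤ s := by
          by_contra h
          exact hnoQ r (by omega) hrt hrQ
        have hr't' : t ≤ r' := by
          by_contra h
          exact hnoQ r' hr't (by omega) hr'Q
        rcases hrs.lt_or_eq with h | rfl
        · exact h2 r s r' j h (by omega) (by omega) le_rfl (by omega) hrQ hPs hr'Q hPN
        rcases hr't'.lt_or_eq with h | rfl
        · exact h1 0 r t r' (by omega) (by omega) (by omega) (by omega) (by omega) hP0 hrQ hPt hr'Q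
        exact int_triple hN hPQ h1 h2 hPN hQN hr0 hrt hr'j hPs hrQ hPt hr'Q
    · refine ⟨s, t, by omega, hst, by omega, ?_, hnoQ, hPs, hPt, ?_⟩
      · intro x hx hPx
        have hx0 : x ≠ 0 := by rintro rfl; exact hP0 hPx
        have hxj : x ≠ j := by rintro rfl; exact hP0 (hP.2 hPx)
        exact Or.inl (hbd x (by omega) (by omega) hPx)
      · exact ⟨fun h => by omega, fun h => by omega⟩
  · obtain ⟨s, t, hs, hst, ht, hPs, hPt, hbd⟩ := exists_min_max (i := i) (j := j) P
      ⟨x0, by omega, by omega, hx0P⟩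
    have hx0 := hbd x0 (by omega) (by omega) hx0P
    refine ⟨s, t, hs, hst, ht, ?_, ?_, hPs, hPt, ?_⟩
    · intro x hx hPx
      rcases hPin x hx hPx with h | ⟨rfl, rfl⟩ | ⟨rfl, rfl⟩
      · exact Or.inl (hbd x h.1 h.2 hPx)
      · have := hbd j (by omega) le_rfl (hP.1 hPx)
        exact Or.inr (Or.inl ⟨rfl, by omega⟩)
      · have := hbd 0 (by omega) (by omega) (hP.2 hPx)
        exact Or.inr (Or.inr ⟨rfl, by omega⟩)
    · intro y hsy hyt hQy
      by_cases hi : i = 0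
      · subst hi
        have hjN' : j ≠ N := fun h => hfull ⟨rfl, h⟩
        by_cases hs0 : s = 0
        · subst hs0
          rcases hcond.1 rfl with h | ⟨y', hy'j, hy'N, hQy'⟩
          · omega
          rcases (show t ≤ y' by omega).lt_or_eq with h | rfl
          · exact h1 0 y t y' hsy hyt h hy'N.le (by omega) hPs hQy hPt hQy'
          · have : t = j := by omega
            subst this
            rcases lt_trichotomy x0 y with h | rfl | h
            · exact h2 0 x0 y t hx0i h hyt hjN (by omega) hQ0 hx0P hQy hPt
            · exact int_triple hN hPQ h1 h2 (hP.1 hPs) hQN hx0i hyt hy'N hx0P hQy hPt hQy'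
            · exact h1 0 y x0 t hsy h hx0j hjN (by omega) hPs hQy hx0P hQy'
        · exact h2 0 s y t (by omega) hsy hyt (by omega) (by omega) hQ0 hPs hQy hPt
      · by_cases htN : t = N
        · have hjN' : j = N := by omega
          subst hjN' htN
          rcases hcond.2 rfl with h | ⟨y', hy'0, hy'i, hQy'⟩
          · omega
          rcases (show y' ≤ s by omega).lt_or_eq with h | rfl
          · exact h2 y' s y t h hsy hyt le_rfl (by omega) hQy' hPs hQy hPt
          · have : y' = i := by omega
            subst this
            rcases lt_trichotomy x0 y with h | rfl | h
            · exact h2 y' x0 y t hx0i h hyt hjN (by omega) hQy' hx0P hQy hPt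
            · exact int_triple hN hPQ h1 h2 hPt hQN hy'0 hx0i hx0j hPs hQy' hx0P hQy
            · exact h1 y' y x0 t hsy h hx0j hjN (by omega) hPs hQy hx0P hQN
        · exact h2 0 s y t (by omega) hsy hyt (by omega) (by omega) hQ0 hPs hQy hPt
    · constructor
      · rintro rfl
        rcases hcond.1 (by omega) with h | ⟨y, h1, h2, h3⟩
        · omega
        · exact Or.inr ⟨y, by omega, h2, h3⟩
      · rintro rfl
        rcases hcond.2 (by omega) with h | ⟨y, h1, h2, h3⟩
        · omega
        · exact Or.inr ⟨y, h1, by omega, h3⟩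

end INT
end KO
namespace KO

section core
variable {V : Type} {H : SimpleGraph V}

/-- `D` has a vertex adjacent to `o k`. -/
def Att (H : SimpleGraph V) (o : ℕ → V) (D : Set V) (k : ℕ) : Prop := ∃ x ∈ D, H.Adj x (o k)

/-- open interval of ring vertices -/
def op (o : ℕ → V) (i j : ℕ) : Set V := {v | ∃ k, i < k ∧ k < j ∧ v = o k}

/-- A ring `o 0, …, o (N-1)` around a connected set `Y`. -/
structure Ring (H : SimpleGraph V) (o : ℕ → V) (N : ℕ) (Y : Set V) : Prop where
  hN : 4 ≤ N
  inj : ∀ i < N, ∀ j < N, o i = o j → i = j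
  wrap : o N = o 0
  conn : Conn H Y
  disj : ∀ k ≤ N, o k ∉ Y
  att : ∀ k ≤ N, Att H o Y k
  cyc : ∀ a b, 0 < a → a < b → b < N → H.Adj (o a) (o b) → b = a + 1
  cyc0 : ∀ a, 0 < a → a < N → H.Adj (o 0) (o a) → a = 1 ∨ a = N - 1
  nc : ∀ C D, Conn H C → Conn H D → Disjoint C D → C ⊆ Y → D ⊆ Y → ∀ a b c d, a < b → b < c →
    c < d → d < N → Att H o C a → Att H o D b → Att H o C c → Att H o D d → False

lemma Att.mono {o : ℕ → V} {D D' : Set V} {k : ℕ} (h : Att H o D k) (hD : D ⊆ D') :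
    Att H o D' k := by
  obtain ⟨x, hx, h⟩ := h
  exact ⟨x, hD hx, h⟩

lemma Ring.noAlt {o : ℕ → V} {N : ℕ} {Y : Set V} (hr : Ring H o N Y) {C D : Set V}
    (hC : Conn H C) (hD : Conn H D) (hd : Disjoint C D) (hCY : C ⊆ Y) (hDY : D ⊆ Y) :
    NoAlt N (Att H o C) (Att H o D) := by
  intro a b c d hab hbc hcd hdN hne ha hb hc hd'
  rcases hdN.lt_or_eq with h | rfl
  · exact hr.nc C D hC hD hd hCY hDY a b c d hab hbc hcd h ha hb hc hd'
  · have h0 : Att H o D 0 := by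
      unfold Att at hd' ⊢
      rwa [hr.wrap] at hd'
    exact hr.nc D C hD hC hd.symm hDY hCY 0 a b c (by omega) hab hbc (by omega) h0 ha hb hc

lemma Ring.att_wrap {o : ℕ → V} {N : ℕ} {Y : Set V} (hr : Ring H o N Y) (D : Set V) :
    Att H o D 0 ↔ Att H o D N := by
  unfold Att; rw [hr.wrap]

/-- hypotheses for the block lemma -/
structure BlockHyp (H : SimpleGraph V) (o : ℕ → V) (N : ℕ) (Y : Set V) (n : ℕ) (C : Set V)
    (i j : ℕ) : Prop where
  sub : C ⊆ Y
  conn : Conn H C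
  conn' : Conn H (Y \ C)
  att0 : Att H o (Y \ C) 0
  w : W H n C (nb H Y C)
  ij : i ≤ j
  jN : j ≤ N
  inn : ∀ x ≤ N, Att H o C x → Inn N i j x
  noQ : ∀ x, i < x → x < j → ¬ Att H o (Y \ C) x
  cond : CondC N i j (Att H o (Y \ C))

/-- properties of the interval selected for a child -/
structure ChildInt (H : SimpleGraph V) (o : ℕ → V) (N : ℕ) (Y : Set V) (n i j : ℕ) (D : Set V)
    (u t : ℕ) : Prop where
  iu : i ≤ u
  ut : u ≤ t
  tj : t ≤ j
  inn : ∀ x ≤ N, Att H o D x → Inn N u t x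
  noQ : ∀ x, u < x → x < t → ¬ Att H o (Y \ D) x
  attu : Att H o D u
  attt : Att H o D t
  w : W H (n + 3) (D ∪ op o u t) (nb H Y D ∪ {o u, o t})

lemma comps_family {A : Set V} {F : Set (Set V)} (hF : ∀ D ∈ F, IsComp H A D) {E : Set V}
    (hE : IsComp H (⋃₀ F) E) : E ∈ F := by
  obtain ⟨x, hx⟩ := hE.ne
  obtain ⟨D, hD, hxD⟩ := hE.sub hx
  have hDE : D ⊆ E := hE.conn_sub (hF D hD).conn (Set.subset_sUnion_of_mem hD) hxD hx
  have hFA : ⋃₀ F ⊆ A := Set.sUnion_subset (fun D hD => (hF D hD).sub)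
  have hED : E ⊆ D := (hF D hD).conn_sub hE.conn (hE.sub.trans hFA) hx hxD
  rw [Set.Subset.antisymm hED hDE]; exact hD

lemma IsComp.nonadj {A D E : Set V} (hD : IsComp H A D) (hE : IsComp H A E) (hne : D ≠ E) :
    ∀ x ∈ D, ∀ y ∈ E, ¬ H.Adj x y := by
  intro x hx y hy hxy
  exact hne (hD.eq hE (hD.closed x hx y (hE.sub hy) hxy) hy)

lemma step_sub [Finite V] {o : ℕ → V} {N : ℕ} {Y : Set V} (hr : Ring H o N Y) {n : ℕ}
    {A K : Set V} (hAY : A ⊆ Y) (hKY : K ⊆ Y) (hKn : K.ncard ≤ n) (hAK : Disjoint A K)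
    (hnbK : ∀ D, IsComp H A D → nb H Y D ⊆ K)
    (hch : ∀ D, IsComp H A D → W H n D (nb H Y D))
    (u t : Set V → ℕ) (m : ℕ) :
    ∀ i j, j - i ≤ m → i ≤ j → j ≤ N → ∀ F : Set (Set V),
    (∀ D ∈ F, IsComp H A D ∧ ChildInt H o N Y n i j D (u D) (t D)) →
    W H (n + 3) (⋃₀ F ∪ op o i j) (K ∪ {o i, o j}) := by
  have hplainD : ∀ D, IsComp H A D → ∀ a b, W H (n + 3) D (K ∪ {a, b}) := by
    intro D hD a b
    have h2 : ({a, b} : Set V).ncard ≤ 2 := ncard_pair_le2 a b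
    have h1 := ((hch D hD).apex h2).le (show n + 2 ≤ n + 3 by omega)
    refine h1.weaken ?_ ?_
    · have := hnbK D hD; grind
    · intro x hx y hy hxy
      rcases hy with hy | hy
      · left
        refine ⟨hKY hy, fun h => Set.disjoint_left.1 hAK (hD.sub h) hy, x, hx, hxy⟩
      · exact Or.inr hy
  have hplain : ∀ F : Set (Set V), (∀ D ∈ F, IsComp H A D) → ∀ a b,
      W H (n + 3) (⋃₀ F) (K ∪ {a, b}) := by
    intro F hF a b
    refine W.comps ?_
    intro D hD
    exact hplainD D (hF D (comps_family hF hD)) a b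
  induction m with
  | zero =>
    intro i j hij hle hjN F hF
    have : op o i j = ∅ := by
      ext x; simp only [op, Set.mem_ofPred_eq, Set.mem_empty_iff_false, iff_false]
      rintro ⟨k, h1, h2, _⟩; omega
    rw [this, Set.union_empty]
    exact hplain F (fun D hD => (hF D hD).1) _ _
  | succ m ih =>
    intro i j hij hle hjN F hF
    by_cases hinter : i + 1 < j
    swap
    · have : op o i j = ∅ := by
        ext x; simp only [op, Set.mem_ofPred_eq, Set.mem_empty_iff_false, iff_false]
        rintro ⟨k, h1, h2, _⟩; omega
      rw [this, Set.union_empty]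
      exact hplain F (fun D hD => (hF D hD).1) _ _
    by_cases hfull : ∃ D ∈ F, u D = i ∧ t D = j
    · obtain ⟨D, hDF, hui, htj⟩ := hfull
      obtain ⟨hD, hI⟩ := hF D hDF
      have hw := hI.w
      rw [hui, htj] at hw
      have hnoQ := hI.noQ
      rw [hui, htj] at hnoQ
      have hw' : W H (n + 3) (D ∪ op o i j) (K ∪ {o i, o j}) := by
        refine hw.weaken ?_ ?_
        · have := hnbK D hD; grind
        · intro x hx y hy hxy
          rcases hy with hy | hy
          · have hyD : y ∉ D := fun h => Set.disjoint_left.1 hAK (hD.sub h) hy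
            left
            rcases hx with hx | ⟨k, hk1, hk2, rfl⟩
            · exact ⟨hKY hy, hyD, x, hx, hxy⟩
            · exact absurd ⟨y, ⟨hKY hy, hyD⟩, hxy.symm⟩ (hnoQ k hk1 hk2)
          · exact Or.inr hy
      have hrest := hplain (F \ {D}) (fun E hE => (hF E hE.1).1) (o i) (o j)
      have hX : ⋃₀ F ∪ op o i j = ⋃₀ (F \ {D}) ∪ (D ∪ op o i j) := by
        ext x
        simp only [Set.mem_union, Set.mem_sUnion, Set.mem_sdiff, Set.mem_singleton_iff]
        constructor
        · rintro (⟨E, hE, hx⟩ | hx)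
          · by_cases hED : E = D
            · subst hED; exact Or.inr (Or.inl hx)
            · exact Or.inl ⟨E, ⟨hE, hED⟩, hx⟩
          · exact Or.inr (Or.inr hx)
        · rintro (⟨E, hE, hx⟩ | hx | hx)
          · exact Or.inl ⟨E, hE.1, hx⟩
          · exact Or.inl ⟨D, hDF, hx⟩
          · exact Or.inr hx
      rw [hX]
      refine W.split _ _ _ ?_ ?_ hrest hw'
      · rw [Set.disjoint_left]
        rintro x ⟨E, hE, hxE⟩ (hx | ⟨k, hk1, hk2, rfl⟩)
        · exact hE.2 ((hF E hE.1).1.eq hD hxE hx)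
        · exact hr.disj k (by omega) (hAY ((hF E hE.1).1.sub hxE))
      · rintro x ⟨E, hE, hxE⟩ y (hy | ⟨k, hk1, hk2, rfl⟩) hxy
        · exact (hF E hE.1).1.nonadj hD hE.2 x hxE y hy hxy
        · refine hnoQ k hk1 hk2 ⟨x, ⟨hAY ((hF E hE.1).1.sub hxE), fun hxD => ?_⟩, hxy⟩
          exact hE.2 ((hF E hE.1).1.eq hD hxE hxD)
    · push Not at hfull
      obtain ⟨r, hir, hrj, hrF⟩ : ∃ r, i < r ∧ r < j ∧ ∀ D ∈ F, t D ≤ r ∨ r ≤ u D := by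
        by_cases h1 : ∀ D ∈ F, t D ≤ i + 1 ∨ i + 1 ≤ u D
        · exact ⟨i + 1, by omega, by omega, h1⟩
        · push Not at h1
          obtain ⟨D, hDF, h1, h2⟩ := h1
          obtain ⟨hD, hI⟩ := hF D hDF
          have hui : u D = i := by have := hI.iu; omega
          have htj : t D < j := by
            have := hI.tj
            have := hfull D hDF hui
            omega
          refine ⟨t D, by omega, htj, ?_⟩
          intro E hE
          by_contra! hcon
          obtain ⟨hEc, hEI⟩ := hF E hE
          refine hEI.noQ (t D) hcon.2 hcon.1 ?_
          obtain ⟨x, hx, hxt⟩ := hI.attt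
          refine ⟨x, ⟨hAY (hD.sub hx), fun hxE => ?_⟩, hxt⟩
          have : D = E := hD.eq hEc hx hxE
          subst this
          omega
      have hci : ∀ D ∈ F, IsComp H A D := fun D hD => (hF D hD).1
      set F1 : Set (Set V) := {D | D ∈ F ∧ t D ≤ r} with hF1
      set F2 : Set (Set V) := {D | D ∈ F ∧ ¬ t D ≤ r} with hF2
      have hF2u : ∀ D ∈ F2, r ≤ u D := fun D hD => (hrF D hD.1).resolve_left hD.2
      have w1 := ih i r (by omega) hir.le (by omega) F1 (by
        intro D hD
        obtain ⟨hDc, hI⟩ := hF D hD.1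
        exact ⟨hDc, hI.iu, hI.ut, hD.2, hI.inn, hI.noQ, hI.attu, hI.attt, hI.w⟩)
      have w2 := ih r j (by omega) hrj.le (by omega) F2 (by
        intro D hD
        obtain ⟨hDc, hI⟩ := hF D hD.1
        exact ⟨hDc, hF2u D hD, hI.ut, hI.tj, hI.inn, hI.noQ, hI.attu, hI.attt, hI.w⟩)
      -- attachments
      have hatt1 : ∀ D ∈ F1, ∀ b, r < b → b ≤ j → Att H o D b → o b = o i := by
        intro D hD b hb hbj hat
        obtain ⟨hDc, hI⟩ := hF D hD.1
        have := hI.iu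
        have h2 := hD.2
        rcases hI.inn b (by omega) hat with h | h | h
        · omega
        · omega
        · have : i = 0 := by omega
          rw [h.1, this, hr.wrap]
      have hatt2 : ∀ D ∈ F2, ∀ b, i ≤ b → b < r → Att H o D b → o b = o j := by
        intro D hD b hb hbj hat
        obtain ⟨hDc, hI⟩ := hF D hD.1
        have := hI.tj
        have h2 := hF2u D hD
        rcases hI.inn b (by omega) hat with h | h | h
        · omega
        · have : j = N := by omega
          rw [h.1, this, hr.wrap]
        · omega
      have hne0 : ∀ b, 0 < b → b < N → o b ≠ o 0 := fun b h h' e =>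
        by have := hr.inj b h' 0 (by omega) e; omega
      have w1' : W H (n + 3) (⋃₀ F1 ∪ op o i r) (insert (o r) (K ∪ {o i, o j})) := by
        refine w1.weaken (by grind) ?_
        intro x hx y hy hxy
        suffices y = o j → y ∈ K ∪ {o i, o r} by grind
        rintro rfl
        rcases hx with ⟨D, hD, hx⟩ | ⟨k, hk1, hk2, rfl⟩
        · have := hatt1 D hD j hrj le_rfl ⟨x, hx, hxy⟩
          rw [this]; simp
        · rcases hjN.lt_or_eq with h | rfl
          · have := hr.cyc k j (by omega) (by omega) h hxy
            omega
          · rw [hr.wrap] at hxy ⊢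
            have := hr.cyc0 k (by omega) (by omega) hxy.symm
            have : i = 0 := by omega
            subst this; simp
      have w2' : W H (n + 3) (⋃₀ F2 ∪ op o r j) (insert (o r) (K ∪ {o i, o j})) := by
        refine w2.weaken (by grind) ?_
        intro x hx y hy hxy
        suffices y = o i → y ∈ K ∪ {o r, o j} by grind
        rintro rfl
        rcases hx with ⟨D, hD, hx⟩ | ⟨k, hk1, hk2, rfl⟩
        · have := hatt2 D hD i le_rfl hir ⟨x, hx, hxy⟩
          rw [this]; simp
        · by_cases hi : 0 < i
          · have := hr.cyc i k hi (by omega) (by omega) hxy.symm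
            omega
          · have hi : i = 0 := by omega
            subst hi
            have := hr.cyc0 k (by omega) (by omega) hxy.symm
            have : j = N := by omega
            subst this
            rw [hr.wrap]; simp
      have w3 : W H (n + 3) ((⋃₀ F1 ∪ op o i r) ∪ (⋃₀ F2 ∪ op o r j))
          (insert (o r) (K ∪ {o i, o j})) := by
        refine W.split _ _ _ ?_ ?_ w1' w2'
        · rw [Set.disjoint_left]
          rintro x (⟨D, hD, hx⟩ | ⟨k, hk1, hk2, rfl⟩) (⟨E, hE, hx'⟩ | ⟨l, hl1, hl2, hkl⟩)
          · have : D = E := (hci D hD.1).eq (hci E hE.1) hx hx'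
            subst this
            exact hE.2 hD.2
          · rw [hkl] at hx
            exact hr.disj l (by omega) (hAY ((hci D hD.1).sub hx))
          · exact hr.disj k (by omega) (hAY ((hci E hE.1).sub hx'))
          · have := hr.inj k (by omega) l (by omega) hkl
            omega
        · rintro x (⟨D, hD, hx⟩ | ⟨k, hk1, hk2, rfl⟩) y (⟨E, hE, hx'⟩ | ⟨l, hl1, hl2, rfl⟩) hxy
          · refine (hci D hD.1).nonadj (hci E hE.1) ?_ x hx y hx' hxy
            rintro rfl
            exact hE.2 hD.2
          · have h1 := hatt1 D hD l hl1 hl2.le ⟨x, hx, hxy⟩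
            have := hr.inj l (by omega) i (by omega) h1
            omega
          · have h1 := hatt2 E hE k hk1.le hk2 ⟨y, hx', hxy.symm⟩
            rcases hjN.lt_or_eq with h | rfl
            · have := hr.inj k (by omega) j h h1
              omega
            · rw [hr.wrap] at h1
              exact hne0 k (by omega) (by omega) h1
          · have := hr.cyc k l (by omega) (by omega) (by omega) hxy
            omega
      have w4 := W.intro (o r) _ _ ?_ ?_ w3
      · refine w4.congr ?_ rfl
        ext x
        simp only [Set.mem_insert_iff, Set.mem_union, Set.mem_sUnion, op, Set.mem_ofPred_eq]
        constructor
        · rintro (rfl | (⟨D, hD, hx⟩ | ⟨k, h1, h2, rfl⟩) | (⟨D, hD, hx⟩ | ⟨k, h1, h2, rfl⟩))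
          · exact Or.inr ⟨r, hir, hrj, rfl⟩
          · exact Or.inl ⟨D, hD.1, hx⟩
          · exact Or.inr ⟨k, h1, by omega, rfl⟩
          · exact Or.inl ⟨D, hD.1, hx⟩
          · exact Or.inr ⟨k, by omega, by omega, rfl⟩
        · rintro (⟨D, hD, hx⟩ | ⟨k, h1, h2, rfl⟩)
          · by_cases h : t D ≤ r
            · exact Or.inr (Or.inl (Or.inl ⟨D, ⟨hD, h⟩, hx⟩))
            · exact Or.inr (Or.inr (Or.inl ⟨D, ⟨hD, h⟩, hx⟩))
          · rcases lt_trichotomy k r with h | rfl | h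
            · exact Or.inr (Or.inl (Or.inr ⟨k, h1, h, rfl⟩))
            · exact Or.inl rfl
            · exact Or.inr (Or.inr (Or.inr ⟨k, h, h2, rfl⟩))
      · rintro ((⟨D, hD, hx⟩ | ⟨k, hk1, hk2, hk⟩) | (⟨D, hD, hx⟩ | ⟨k, hk1, hk2, hk⟩))
        · exact hr.disj r (by omega) (hAY ((hci D hD.1).sub hx))
        · have := hr.inj r (by omega) k (by omega) hk
          omega
        · exact hr.disj r (by omega) (hAY ((hci D hD.1).sub hx))
        · have := hr.inj r (by omega) k (by omega) hk
          omega
      · have h1 : insert (o r) (K ∪ {o i, o j}) = K ∪ {o r, o i, o j} := by grind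
        rw [h1]
        have h2 := Set.ncard_union_le K {o r, o i, o j}
        have h3 : ({o r, o i, o j} : Set V).ncard ≤ 3 :=
          (Set.ncard_insert_le _ _).trans (by have := ncard_pair_le2 (o i) (o j); omega)
        omega

lemma step [Finite V] {o : ℕ → V} {N : ℕ} {Y : Set V} (hr : Ring H o N Y) {n : ℕ}
    {C L : Set V} (hCY : C ⊆ Y) (hLC : L ⊆ C) (hKn : (nb H Y C ∪ L).ncard ≤ n)
    (hch : ∀ D, IsComp H (C \ L) D → W H n D (nb H Y D) ∧ Conn H (Y \ D) ∧ Att H o (Y \ D) 0)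
    {i j : ℕ} (hij : i ≤ j) (hjN : j ≤ N)
    (hblock : ∀ D, IsComp H (C \ L) D → ∀ u t, BlockHyp H o N Y n D u t →
      W H (n + 3) (D ∪ op o u t) (nb H Y D ∪ {o u, o t}))
    (hA : ∀ x ≤ N, Att H o C x → Inn N i j x)
    (hcond : CondC N i j (Att H o (Y \ C))) :
    W H (n + 3) ((C \ L) ∪ op o i j) ((nb H Y C ∪ L) ∪ {o i, o j}) := by
  set A := C \ L with hAdef
  have hAY : A ⊆ Y := by grind
  have hSC : ∀ y ∈ nb H Y C, y ∉ C := fun y hy => hy.2.1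
  have hSY : ∀ y ∈ nb H Y C, y ∈ Y := fun y hy => hy.1
  have hKY : nb H Y C ∪ L ⊆ Y := by grind
  have hAK : Disjoint A (nb H Y C ∪ L) := by rw [Set.disjoint_left]; grind
  have hnbK : ∀ D, IsComp H A D → nb H Y D ⊆ nb H Y C ∪ L := by
    intro D hD y hy
    obtain ⟨hyY, hyD, x, hx, hxy⟩ := hy
    by_cases hyC : y ∈ C
    · right
      by_contra hyL
      exact hyD (hD.closed x hx y ⟨hyC, hyL⟩ hxy)
    · exact Or.inl ⟨hyY, hyC, x, (hD.sub hx).1, hxy⟩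
  have hsel : ∀ D, ∃ u t, IsComp H A D → (∃ x, i < x ∧ x < j ∧ Att H o D x) →
      ChildInt H o N Y n i j D u t := by
    intro D
    by_cases hD : IsComp H A D
    swap
    · exact ⟨0, 0, fun h => absurd h hD⟩
    by_cases hinter : ∃ x, i < x ∧ x < j ∧ Att H o D x
    swap
    · exact ⟨0, 0, fun _ h => absurd h hinter⟩
    obtain ⟨hDW, hDconn, hD0⟩ := hch D hD
    have hDC : D ⊆ C := hD.sub.trans Set.sdiff_subset
    have hDY : D ⊆ Y := hD.sub.trans hAY
    have hdis : Disjoint D (Y \ D) := Set.disjoint_sdiff_right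
    obtain ⟨u, t, h1, h2, h3, h4, h5, h6, h7, h8⟩ := int_lemma hr.hN (P := Att H o D)
      (Q := Att H o (Y \ D)) hD0 (hr.att_wrap D) (hr.att_wrap _) (by
        intro x hx
        obtain ⟨y, hy, hxy⟩ := hr.att x hx
        by_cases hyD : y ∈ D
        · exact Or.inl ⟨y, hyD, hxy⟩
        · exact Or.inr ⟨y, ⟨hy, hyD⟩, hxy⟩)
      (hr.noAlt hD.conn hDconn hdis hDY Set.sdiff_subset)
      (hr.noAlt hDconn hD.conn hdis.symm Set.sdiff_subset hDY) hjN
      (fun x hx h => hA x hx (h.mono hDC)) hinter (by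
        have hsub : Y \ C ⊆ Y \ D := by grind
        constructor
        · intro hi
          rcases hcond.1 hi with h | ⟨y, hy1, hy2, hy3⟩
          · exact Or.inl h
          · exact Or.inr ⟨y, hy1, hy2, hy3.mono hsub⟩
        · intro hi
          rcases hcond.2 hi with h | ⟨y, hy1, hy2, hy3⟩
          · exact Or.inl h
          · exact Or.inr ⟨y, hy1, hy2, hy3.mono hsub⟩)
    exact ⟨u, t, fun _ _ => ⟨h1, h2, h3, h4, h5, h6, h7, hblock D hD u t
      ⟨hDY, hD.conn, hDconn, hD0, hDW, h2, by omega, h4, h5, h8⟩⟩⟩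
  choose u t hut using hsel
  have hsub := step_sub hr hAY hKY hKn hAK hnbK (fun D hD => (hch D hD).1) u t
  have h1 := hsub (j - i) i j le_rfl hij hjN
    {D | IsComp H A D ∧ ∃ x, i < x ∧ x < j ∧ Att H o D x}
    (fun D hD => ⟨hD.1, hut D hD.1 hD.2⟩)
  -- the remaining components
  have h2 : W H (n + 3) (⋃₀ {D | IsComp H A D ∧ ¬ ∃ x, i < x ∧ x < j ∧ Att H o D x})
      ((nb H Y C ∪ L) ∪ {o i, o j}) := by
    refine W.comps ?_
    intro D hD
    have hD' := comps_family (A := A) (fun D (hD : D ∈ {D | IsComp H A D ∧ ¬ ∃ x, i < x ∧ x < j ∧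
      Att H o D x}) => hD.1) hD
    have hDA : IsComp H A D := hD'.1
    have hc2 : ({o i, o j} : Set V).ncard ≤ 2 := ncard_pair_le2 _ _
    have h1 := ((hch D hDA).1.apex hc2).le (show n + 2 ≤ n + 3 by omega)
    refine h1.weaken ?_ ?_
    · have := hnbK D hDA; grind
    · intro x hx y hy hxy
      rcases hy with hy | hy
      · left
        refine ⟨hKY hy, fun h => Set.disjoint_left.1 hAK (hDA.sub h) hy, x, hx, hxy⟩
      · exact Or.inr hy
  have h3 := W.split _ _ _ ?_ ?_ h2 h1
  · refine h3.congr ?_ rfl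
    ext x
    simp only [Set.mem_union, Set.mem_sUnion, Set.mem_ofPred_eq]
    constructor
    · rintro (⟨D, hD, hx⟩ | ⟨D, hD, hx⟩ | hx)
      · exact Or.inl (hD.1.sub hx)
      · exact Or.inl (hD.1.sub hx)
      · exact Or.inr hx
    · rintro (hx | hx)
      · obtain ⟨D, hD, hxD⟩ := exists_comp (H := H) hx
        by_cases h : ∃ x, i < x ∧ x < j ∧ Att H o D x
        · exact Or.inr (Or.inl ⟨D, ⟨hD, h⟩, hxD⟩)
        · exact Or.inl ⟨D, ⟨hD, h⟩, hxD⟩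
      · exact Or.inr (Or.inr hx)
  · rw [Set.disjoint_left]
    rintro x ⟨D, hD, hx⟩ (⟨E, hE, hx'⟩ | ⟨k, hk1, hk2, rfl⟩)
    · have := hD.1.eq hE.1 hx hx'
      subst this
      exact hD.2 hE.2
    · exact hr.disj k (by omega) (hAY (hD.1.sub hx))
  · rintro x ⟨D, hD, hx⟩ y (⟨E, hE, hx'⟩ | ⟨k, hk1, hk2, rfl⟩) hxy
    · refine hD.1.nonadj hE.1 ?_ x hx y hx' hxy
      rintro rfl
      exact hD.2 hE.2
    · exact hD.2 ⟨k, hk1, hk2, x, hx, hxy⟩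

lemma block [Finite V] {o : ℕ → V} {N : ℕ} {Y : Set V} (hr : Ring H o N Y) {n : ℕ} (m : ℕ) :
    ∀ C i j, C.ncard ≤ m → BlockHyp H o N Y n C i j →
      W H (n + 3) (C ∪ op o i j) (nb H Y C ∪ {o i, o j}) := by
  induction m with
  | zero =>
    intro C i j hc hB
    have : C = ∅ := by rw [← Set.ncard_eq_zero]; omega
    exact absurd hB.conn.1 (by simp [this])
  | succ m ih =>
    intro C i j hc hB
    have hS : (nb H Y C).Nonempty := by
      obtain ⟨x, hx, y, hy, hxy⟩ := hr.conn.exists_adj hB.conn.1 hB.sub hB.conn'.1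
      exact ⟨y, hy.1, hy.2, x, hx, hxy⟩
    obtain ⟨L, hLC, ⟨l, hl⟩, hLn, hcomp⟩ := good_K hB.sub hB.conn hB.conn' hS hB.w
    have hst := step hr hB.sub hLC hLn (fun D hD => ⟨(hcomp D hD).1, (hcomp D hD).2,
      hB.att0.mono (by have := hD.sub; grind)⟩) hB.ij hB.jN (by
        intro D hD u t hDB
        refine ih D u t ?_ hDB
        have : D.ncard < C.ncard := Set.ncard_lt_ncard
          ⟨hD.sub.trans Set.sdiff_subset, fun h => (hD.sub (h (hLC hl))).2 hl⟩
        omega) hB.inn hB.cond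
    have he : (nb H Y C ∪ {o i, o j}) ∪ L = nb H Y C ∪ L ∪ {o i, o j} := by
      ext x; simp only [Set.mem_union]; tauto
    have := W.intros (Q := nb H Y C ∪ {o i, o j}) (F := L) (hst.congr rfl he.symm) ?_ ?_
    · refine this.congr ?_ rfl
      ext x; grind
    · rw [Set.disjoint_left]
      rintro x (hx | ⟨k, hk1, hk2, rfl⟩) hxL
      · exact hx.2 hxL
      · exact hr.disj k (by have := hB.jN; omega) (hB.sub (hLC hxL))
    · rw [he]
      have h2 := Set.ncard_union_le (nb H Y C ∪ L) {o i, o j}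
      have := ncard_pair_le2 (o i) (o j)
      omega

lemma core [Finite V] {o : ℕ → V} {N : ℕ} {Y : Set V} (hr : Ring H o N Y) {n : ℕ}
    (hW : W H n Y ∅) : W H (n + 3) (Y ∪ {v | ∃ k < N, v = o k}) ∅ := by
  have hN := hr.hN
  have hYY : nb H Y Y = ∅ := by
    ext x; simp only [mem_nb, Set.mem_empty_iff_false, iff_false]; tauto
  have hn : 1 ≤ n := by
    obtain ⟨v, hv, hc, _⟩ := hW.extract Y Y hr.conn (by simp) subset_rfl (by rw [hYY])
    rw [hYY] at hc
    simpa using hc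
  obtain ⟨z, hzY, hz0⟩ := hr.att 0 (by omega)
  have hrt := hW.reroot (Q := {z}) (by
    intro a ha b hb hab
    exact absurd (ha.trans hb.symm) hab) (by simpa using hzY)
  have hzadj : ∀ D, IsComp H (Y \ {z}) D → ∃ d ∈ D, H.Adj d z := by
    intro D hD
    have hDs := hD.sub
    obtain ⟨x, hx, y, hy, hxy⟩ := hr.conn.exists_adj hD.ne (by grind) ⟨z, hzY, by grind⟩
    have : y = z := by
      by_contra hne
      exact hy.2 (hD.closed x hx y ⟨hy.1, hne⟩ hxy)
    exact ⟨x, hx, this ▸ hxy⟩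
  have hst := step hr (n := n) (C := Y) (L := {z}) subset_rfl (by simpa using hzY)
    (by rw [hYY]; simpa using hn) (by
      intro D hD
      have hDs := hD.sub
      have hzD : z ∉ D := fun h => (hDs h).2 rfl
      have hnb : nb H Y D ⊆ {z} := by
        intro y hy
        by_contra hne
        obtain ⟨hyY, hyD, x, hx, hxy⟩ := hy
        exact hyD (hD.closed x hx y ⟨hyY, hne⟩ hxy)
      have hnD : ∀ y ∈ nb H Y D, y ∉ D := fun y hy => hy.2.1
      refine ⟨?_, ?_, ⟨z, ⟨hzY, hzD⟩, hz0⟩⟩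
      · refine (hrt.restrict (D ∪ nb H Y D)).congr ?_ ?_
        · ext x; grind
        · ext x; grind
      · have : Y \ D = {z} ∪ ((Y \ {z}) \ D) := by ext x; grind
        rw [this]
        refine (Conn.singleton z).union_comps ?_
        intro E hE
        have hEs := hE.sub
        have hE' : IsComp H (Y \ {z}) E := by
          refine ⟨hE.conn, by grind, ?_⟩
          intro x hx y hy hxy
          refine hE.closed x hx y ⟨hy, fun hyD => ?_⟩ hxy
          exact (hEs hx).2 (hD.closed y hyD x (hEs hx).1 hxy.symm)
        obtain ⟨d, hd, hdz⟩ := hzadj E hE'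
        exact ⟨z, rfl, d, hd, hdz.symm⟩)
    (i := 0) (j := N) (by omega) le_rfl
    (fun D hD u t hDB => block hr _ D u t le_rfl hDB)
    (fun x hx _ => Or.inl ⟨by omega, hx⟩) (by simp [CondC])
  rw [hYY, hr.wrap, Set.empty_union] at hst
  have hz0' : z ≠ o 0 := by rintro rfl; exact hr.disj 0 (by omega) hzY
  have hst' : W H (n + 3) (Y \ {z} ∪ op o 0 N) (∅ ∪ {z, o 0}) := by
    refine hst.congr rfl ?_
    ext x; grind
  have h4 := hst'.intros ?_ ?_
  · refine h4.congr ?_ rfl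
    ext x
    simp only [Set.mem_union, Set.mem_insert_iff, Set.mem_singleton_iff, Set.mem_sdiff, op,
      Set.mem_ofPred_eq]
    constructor
    · rintro ((hx | ⟨k, h1, h2, rfl⟩) | rfl | rfl)
      · exact Or.inl hx.1
      · exact Or.inr ⟨k, h2, rfl⟩
      · exact Or.inl hzY
      · exact Or.inr ⟨0, by omega, rfl⟩
    · rintro (hx | ⟨k, h2, rfl⟩)
      · by_cases h : x = z
        · exact Or.inr (Or.inl h)
        · exact Or.inl (Or.inl ⟨hx, h⟩)
      · by_cases h : k = 0
        · subst h; exact Or.inr (Or.inr rfl)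
        · exact Or.inl (Or.inr ⟨k, by omega, h2, rfl⟩)
  · rw [Set.disjoint_left]
    rintro x (hx | ⟨k, h1, h2, rfl⟩) hx'
    · rcases hx' with rfl | rfl
      · exact hx.2 rfl
      · exact hr.disj 0 (by omega) hx.1
    · rcases hx' with h | h
      · exact hr.disj k (by omega) (h ▸ hzY)
      · have := hr.inj k h2 0 (by omega) h
        omega
  · rw [Set.empty_union]
    have := ncard_pair_le2 z (o 0)
    omega

end core
end KO
namespace KO

section soc
variable {V : Type} {H : SimpleGraph V}

/-- Non-crossing condition for the vertices of `O` ordered by `pos`. -/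
def NC (H : SimpleGraph V) (U O : Set V) (pos : V → ℕ) : Prop :=
  ∀ A B, Conn H A → Conn H B → Disjoint A B → A ⊆ U → B ⊆ U →
    ∀ a ∈ O, ∀ b ∈ O, ∀ c ∈ O, ∀ d ∈ O, pos a < pos b → pos b < pos c → pos c < pos d →
    a ∈ A → b ∈ B → c ∈ A → d ∈ B → False

lemma NC.mono {U O U' O' : Set V} {pos : V → ℕ} (h : NC H U O pos) (hU : U' ⊆ U) (hO : O' ⊆ O) :
    NC H U' O' pos := by
  intro A B hA hB hd hAU hBU a ha b hb c hc d hd'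
  exact h A B hA hB hd (hAU.trans hU) (hBU.trans hU) a (hO ha) b (hO hb) c (hO hc) d (hO hd')

/-- `p,q` are cyclically consecutive in `O`. -/
def Cons (O : Set V) (pos : V → ℕ) (p q : V) : Prop :=
  (∀ x ∈ O, pos p ≤ pos x ∧ pos x ≤ pos q) ∨ (∀ x ∈ O, pos x ≤ pos p ∨ pos q ≤ pos x)

lemma conn_edge {p q : V} {A : Set V} (hA : Conn (H ⊔ edge p q) A) :
    Conn H A ∨ (p ∈ A ∧ q ∈ A ∧ ∀ x ∈ A, ∃ A' ⊆ A, Conn H A' ∧ x ∈ A' ∧ (p ∈ A' ∨ q ∈ A')) := by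
  by_cases hpq : p ∈ A ∧ q ∈ A
  · right
    refine ⟨hpq.1, hpq.2, ?_⟩
    obtain ⟨P, hP, hpP⟩ := exists_comp (H := H) hpq.1
    obtain ⟨Q, hQ, hqQ⟩ := exists_comp (H := H) hpq.2
    have := hA.2 (P ∪ Q) (Set.union_subset hP.sub hQ.sub) ⟨p, Or.inl hpP⟩ (by
      intro x hx y hy hxy
      rw [sup_adj, edge_adj] at hxy
      rcases hxy with hxy | ⟨⟨rfl, rfl⟩ | ⟨rfl, rfl⟩, _⟩
      · rcases hx with hx | hx
        · exact Or.inl (hP.closed x hx y hy hxy)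
        · exact Or.inr (hQ.closed x hx y hy hxy)
      · exact Or.inr hqQ
      · exact Or.inl hpP)
    intro x hx
    rcases this hx with h | h
    · exact ⟨P, hP.sub, hP.conn, h, Or.inl hpP⟩
    · exact ⟨Q, hQ.sub, hQ.conn, h, Or.inr hqQ⟩
  · left
    refine ⟨hA.1, ?_⟩
    intro T hT hne hcl
    refine hA.2 T hT hne ?_
    intro x hx y hy hxy
    rw [sup_adj, edge_adj] at hxy
    rcases hxy with hxy | ⟨⟨rfl, rfl⟩ | ⟨rfl, rfl⟩, _⟩
    · exact hcl x hx y hy hxy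
    · exact absurd ⟨hT hx, hy⟩ hpq
    · exact absurd ⟨hy, hT hx⟩ hpq

lemma NC.add_edge {U O : Set V} {pos : V → ℕ} (h : NC H U O pos) (hinj : Set.InjOn pos O)
    {p q : V} (hp : p ∈ O) (hq : q ∈ O) (hpq : pos p < pos q)
    (hcons : Cons O pos p q) : NC (H ⊔ edge p q) U O pos := by
  intro A B hA hB hd hAU hBU a ha b hb c hc d hd' hab hbc hcd haA hbB hcA hdB
  rw [Set.disjoint_left] at hd
  have hne : ∀ x ∈ O, ∀ y ∈ O, x ≠ y → pos x ≠ pos y := fun x hx y hy hxy e => hxy (hinj hx hy e)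
  rcases conn_edge hA with hA' | ⟨hpA, hqA, hA'⟩
  · rcases conn_edge hB with hB' | ⟨hpB, hqB, hB'⟩
    · exact h A B hA' hB' (Set.disjoint_left.2 hd) hAU hBU a ha b hb c hc d hd' hab hbc hcd haA hbB
        hcA hdB
    · have h1 := hne a ha p hp (by rintro rfl; exact hd haA hpB)
      have h2 := hne a ha q hq (by rintro rfl; exact hd haA hqB)
      have h3 := hne c hc p hp (by rintro rfl; exact hd hcA hpB)
      have h4 := hne c hc q hq (by rintro rfl; exact hd hcA hqB)
      obtain ⟨X, hX, hXc, hbX, hpqX⟩ := hB' b hbB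
      obtain ⟨Z, hZ, hZc, hdZ, hpqZ⟩ := hB' d hdB
      have ncX := h A X hA' hXc (Set.disjoint_left.2 fun x hx hx' => hd hx (hX hx')) hAU (hX.trans hBU)
      have ncX' := h X A hXc hA' (Set.disjoint_left.2 fun x hx hx' => hd hx' (hX hx)) (hX.trans hBU) hAU
      have ncZ := h A Z hA' hZc (Set.disjoint_left.2 fun x hx hx' => hd hx (hZ hx')) hAU (hZ.trans hBU)
      rcases hcons with hc1 | hc1
      · have ha1 := hc1 a ha
        have hb1 := hc1 b hb
        have hc' := hc1 c hc
        rcases hpqX with hx | hx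
        · exact ncX' p hp a ha b hb c hc (by omega) hab hbc hx haA hbX hcA
        · exact ncX a ha b hb c hc q hq hab hbc (by omega) haA hbX hcA hx
      · have ha1 := hc1 a ha
        have hc' := hc1 c hc
        by_cases hmid : pos a < pos p ∧ pos q < pos c
        · rcases hpqZ with hx | hx
          · exact ncZ a ha p hp c hc d hd' (by omega) (by omega) hcd haA hx hcA hdZ
          · exact ncZ a ha q hq c hc d hd' (by omega) (by omega) hcd haA hx hcA hdZ
        · by_cases hlow : pos q < pos a
          · rcases hpqX with hx | hx
            · exact ncX' p hp a ha b hb c hc (by omega) hab hbc hx haA hbX hcA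
            · exact ncX' q hq a ha b hb c hc (by omega) hab hbc hx haA hbX hcA
          · rcases hpqX with hx | hx
            · exact ncX a ha b hb c hc p hp hab hbc (by omega) haA hbX hcA hx
            · exact ncX a ha b hb c hc q hq hab hbc (by omega) haA hbX hcA hx
  · have hB' : Conn H B := by
      rcases conn_edge hB with hB' | ⟨hpB, hqB, hB'⟩
      · exact hB'
      · exact absurd hpB (hd hpA)
    have h1 := hne b hb p hp (by rintro rfl; exact hd hpA hbB)
    have h2 := hne b hb q hq (by rintro rfl; exact hd hqA hbB)
    have h3 := hne d hd' p hp (by rintro rfl; exact hd hpA hdB)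
    have h4 := hne d hd' q hq (by rintro rfl; exact hd hqA hdB)
    obtain ⟨X, hX, hXc, haX, hpqX⟩ := hA' a haA
    obtain ⟨Z, hZ, hZc, hcZ, hpqZ⟩ := hA' c hcA
    have ncX := h X B hXc hB' (Set.disjoint_left.2 fun x hx hx' => hd (hX hx) hx') (hX.trans hAU) hBU
    have ncZ := h Z B hZc hB' (Set.disjoint_left.2 fun x hx hx' => hd (hZ hx) hx') (hZ.trans hAU) hBU
    have ncZ' := h B Z hB' hZc (Set.disjoint_left.2 fun x hx hx' => hd (hZ hx') hx) hBU (hZ.trans hAU)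
    rcases hcons with hc1 | hc1
    · have hb1 := hc1 b hb
      have hd1 := hc1 d hd'
      rcases hpqZ with hx | hx
      · exact ncZ p hp b hb c hc d hd' (by omega) hbc hcd hx hbB hcZ hdB
      · exact ncZ' b hb c hc d hd' q hq hbc hcd (by omega) hbB hcZ hdB hx
    · have hb1 := hc1 b hb
      have hd1 := hc1 d hd'
      by_cases hmid : pos b < pos p ∧ pos q < pos d
      · rcases hpqX with hx | hx
        · exact ncX a ha b hb p hp d hd' hab (by omega) (by omega) haX hbB hx hdB
        · exact ncX a ha b hb q hq d hd' hab (by omega) (by omega) haX hbB hx hdB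
      · by_cases hlow : pos q < pos b
        · rcases hpqZ with hx | hx
          · exact ncZ p hp b hb c hc d hd' (by omega) hbc hcd hx hbB hcZ hdB
          · exact ncZ q hq b hb c hc d hd' (by omega) hbc hcd hx hbB hcZ hdB
        · rcases hpqZ with hx | hx
          · exact ncZ' b hb c hc d hd' p hp hbc hcd (by omega) hbB hcZ hdB hx
          · exact ncZ' b hb c hc d hd' q hq hbc hcd (by omega) hbB hcZ hdB hx

/-- gluing along a clique -/
lemma W.glue [Finite V] {n : ℕ} {U U1 U2 Q : Set V} (hU : U = U1 ∪ U2) (hQ : U1 ∩ U2 = Q)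
    (hcl : ∀ a ∈ Q, ∀ b ∈ Q, a ≠ b → H.Adj a b) (hQn : Q.ncard ≤ n)
    (hadj : ∀ x ∈ U1, x ∉ Q → ∀ y ∈ U2, y ∉ Q → ¬ H.Adj x y)
    (h1 : W H n U1 ∅) (h2 : W H n U2 ∅) : W H n U ∅ := by
  have hQ1 : Q ⊆ U1 := by rw [← hQ]; exact Set.inter_subset_left
  have hQ2 : Q ⊆ U2 := by rw [← hQ]; exact Set.inter_subset_right
  have w1 := h1.reroot hcl hQ1
  have w2 := h2.reroot hcl hQ2
  have w3 := W.split _ _ _ (by rw [Set.disjoint_left]; grind) (by grind) w1 w2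
  have w4 := W.intros (Q := ∅) (F := Q) (w3.congr rfl (by simp))
    (by rw [Set.disjoint_left]; grind) (by simpa using hQn)
  refine w4.congr ?_ rfl
  ext x; grind

/-- the inductive statement -/
def SocBelow (V : Type) (n m : ℕ) : Prop :=
  ∀ (H : SimpleGraph V) (U O : Set V) (pos : V → ℕ), U.ncard < m → O ⊆ U → Set.InjOn pos O →
    NC H U O pos → W H n (U \ O) ∅ → W H (n + 3) U ∅

lemma soc_split [Finite V] {n : ℕ} {U O : Set V} {pos : V → ℕ} (ih : SocBelow V n U.ncard)
    (hinj : Set.InjOn pos O) (hnc : NC H U O pos) (hW : W H n (U \ O) ∅)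
    {p q : V} (hp : p ∈ O) (hq : q ∈ O) (hpq : pos p < pos q) {U1 U2 : Set V}
    (hU : U = U1 ∪ U2) (hinter : U1 ∩ U2 = {p, q})
    (hc1 : Cons (O ∩ U1) pos p q) (hc2 : Cons (O ∩ U2) pos p q)
    (hadj : ∀ x ∈ U1, x ∉ ({p, q} : Set V) → ∀ y ∈ U2, y ∉ ({p, q} : Set V) → ¬ H.Adj x y)
    {g1 g2 : V} (hg1 : g1 ∈ U1) (hg1' : g1 ∉ U2) (hg2 : g2 ∈ U2) (hg2' : g2 ∉ U1) :
    W H (n + 3) U ∅ := by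
  have hne : p ≠ q := by rintro rfl; omega
  have hpqi : p ∈ U1 ∩ U2 ∧ q ∈ U1 ∩ U2 := by rw [hinter]; simp
  have key : ∀ U', U' ⊆ U → p ∈ U' → q ∈ U' → U'.ncard < U.ncard → Cons (O ∩ U') pos p q →
      W (H ⊔ edge p q) (n + 3) U' ∅ := by
    intro U' hU' hp' hq' hlt hc
    refine ih (H ⊔ edge p q) U' (O ∩ U') pos hlt Set.inter_subset_right
      (hinj.mono Set.inter_subset_left)
      ((hnc.mono hU' Set.inter_subset_left).add_edge (hinj.mono Set.inter_subset_left)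
        ⟨hp, hp'⟩ ⟨hq, hq'⟩ hpq hc) ?_
    have h1 := hW.restrict U'
    have h2 : W H n (U' \ (O ∩ U')) ∅ := by
      refine h1.congr ?_ (by simp)
      ext x; grind
    refine h2.congr_graph ?_
    intro x hx y hy hxy
    rw [sup_adj, edge_adj] at hxy
    rcases hxy with hxy | ⟨⟨rfl, rfl⟩ | ⟨rfl, rfl⟩, _⟩
    · exact hxy
    · exact absurd ⟨hp, hp'⟩ hx.2
    · exact absurd ⟨hq, hq'⟩ hx.2
  have w1 := key U1 (by grind) hpqi.1.1 hpqi.2.1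
    (Set.ncard_lt_ncard ⟨by grind, fun h => hg2' (h (by grind))⟩) hc1
  have w2 := key U2 (by grind) hpqi.1.2 hpqi.2.2
    (Set.ncard_lt_ncard ⟨by grind, fun h => hg1' (h (by grind))⟩) hc2
  refine W.antitone ?_ (le_sup_left : H ≤ H ⊔ edge p q)
  refine W.glue hU hinter ?_ ?_ ?_ w1 w2
  · intro a ha b hb hab
    rw [sup_adj, edge_adj]
    right
    grind
  · have := ncard_pair_le2 p q
    omega
  · intro x hx hx' y hy hy' hxy
    rw [sup_adj, edge_adj] at hxy
    rcases hxy with hxy | ⟨h, _⟩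
    · exact hadj x hx hx' y hy hy' hxy
    · grind

lemma Conn.add_pair {Y : Set V} (hY : Conn H Y) {a b : V} (ha : ∃ y ∈ Y, H.Adj y a)
    (hb : ∃ y ∈ Y, H.Adj y b) : Conn H (Y ∪ {a, b}) := by
  obtain ⟨y, hy, hya⟩ := ha
  obtain ⟨z, hz, hzb⟩ := hb
  have := (hY.insert_adj hy hya).insert_adj (Set.mem_insert_of_mem _ hz) hzb
  convert this using 1
  ext x; grind

lemma Conn.pair {a b : V} (h : H.Adj a b) : Conn H {a, b} := by
  have := (Conn.singleton (H := H) b).insert_adj rfl h.symm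
  exact this

lemma enum_O [Finite V] (O : Set V) (pos : V → ℕ) (hinj : Set.InjOn pos O) (hne : O.Nonempty) :
    ∃ o : ℕ → V, (∀ k < O.ncard, o k ∈ O) ∧
      (∀ i j, i < j → j < O.ncard → pos (o i) < pos (o j)) ∧ (∀ x ∈ O, ∃ k < O.ncard, x = o k) := by
  classical
  obtain ⟨v0, hv0⟩ := hne
  let S : Finset ℕ := (Set.toFinite (pos '' O)).toFinset
  have hS : S.card = O.ncard := by
    rw [← hinj.ncard_image, Set.ncard_eq_toFinset_card _ (Set.toFinite (pos '' O))]
  let f := S.orderEmbOfFin hS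
  have hf : ∀ k, ∃ v ∈ O, pos v = f k := by
    intro k
    have := S.orderEmbOfFin_mem hS k
    have h2 : f k ∈ pos '' O := (Set.toFinite (pos '' O)).mem_toFinset.1 this
    exact h2
  choose g hgO hg using hf
  refine ⟨fun k => if h : k < O.ncard then g ⟨k, h⟩ else v0, ?_, ?_, ?_⟩
  · intro k hk
    simp only [hk, dif_pos]
    exact hgO _
  · intro i j hij hj
    have hi : i < O.ncard := by omega
    simp only [hi, hj, dif_pos, hg]
    exact (S.orderEmbOfFin hS).strictMono hij
  · intro x hx
    have : pos x ∈ Set.range f := by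
      rw [Finset.range_orderEmbOfFin]
      simp [S]
      exact ⟨x, hx, rfl⟩
    obtain ⟨k, hk⟩ := this
    refine ⟨k.1, k.2, ?_⟩
    simp only [k.2, dif_pos]
    exact hinj hx (hgO _) (by rw [hg]; exact hk.symm)

end soc
end KO
namespace KO

section soc2
variable {V : Type} {H : SimpleGraph V}

lemma NC.cross {U O : Set V} {pos : V → ℕ} (h : NC H U O pos) {C D : Set V} (hC : Conn H C)
    (hD : Conn H D) (hd : ∀ x ∈ C, x ∉ D) (hCU : C ⊆ U) (hDU : D ⊆ U) {p q s z : V}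
    (hp : p ∈ O) (hq : q ∈ O) (hs : s ∈ O) (hz : z ∈ O) (hpC : p ∈ C) (hqC : q ∈ C)
    (hsD : s ∈ D) (hzD : z ∈ D) (h1 : pos p < pos s) (h2 : pos s < pos q)
    (h3 : pos z < pos p ∨ pos q < pos z) : False := by
  rcases h3 with h3 | h3
  · exact h D C hD hC (Set.disjoint_left.2 fun x hx hx' => hd x hx' hx) hDU hCU z hz p hp s hs q hq
      h3 h1 h2 hzD hpC hsD hqC
  · exact h C D hC hD (Set.disjoint_left.2 hd) hCU hDU p hp s hs q hq z hz
      h1 h2 h3 hpC hsD hqC hzD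

lemma soc_b2 [Finite V] {n : ℕ} {U O : Set V} {pos : V → ℕ} (ih : SocBelow V n U.ncard)
    (hOU : O ⊆ U) (hinj : Set.InjOn pos O) (hnc : NC H U O pos) (hW : W H n (U \ O) ∅)
    {Y : Set V} (hY : IsComp H (U \ O) Y) {p q : V} (hp : p ∈ O) (hq : q ∈ O)
    (hpq : pos p < pos q) (hpY : ∃ y ∈ Y, H.Adj y p) (hqY : ∃ y ∈ Y, H.Adj y q) {S : Set V}
    (hS : (∀ x, x ∈ S ↔ x ∈ O ∧ pos p < pos x ∧ pos x < pos q) ∨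
      (∀ x, x ∈ S ↔ x ∈ O ∧ (pos x < pos p ∨ pos q < pos x)))
    (hSA : ∀ x ∈ S, ¬ ∃ y ∈ Y, H.Adj y x) (hSne : S.Nonempty) : W H (n + 3) U ∅ := by
  obtain ⟨g, hg⟩ := hSne
  obtain ⟨y0, hy0⟩ := hY.ne
  have hYO : ∀ y ∈ Y, y ∉ O := fun y hy => (hY.sub hy).2
  have hYU : ∀ y ∈ Y, y ∈ U := fun y hy => (hY.sub hy).1
  have hSO : ∀ x ∈ S, x ∈ O ∧ x ≠ p ∧ x ≠ q := by
    intro x hx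
    rcases hS with hS | hS
    · have := (hS x).1 hx
      refine ⟨this.1, ?_, ?_⟩ <;> rintro rfl <;> omega
    · have := (hS x).1 hx
      refine ⟨this.1, ?_, ?_⟩ <;> rintro rfl <;> omega
  let Z : Set V := {z | ∃ C, IsComp H ((U \ Y) \ {p, q}) C ∧ z ∈ C ∧ ∃ s ∈ C, s ∈ S}
  have hZX : ∀ z ∈ Z, z ∈ U ∧ z ∉ Y ∧ z ≠ p ∧ z ≠ q := by
    rintro z ⟨C, hC, hz, -⟩
    have := hC.sub hz
    simp only [Set.mem_sdiff, Set.mem_insert_iff, Set.mem_singleton_iff, not_or] at this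
    tauto
  have hSZ : ∀ x ∈ S, x ∈ Z := by
    intro x hx
    have hx' := hSO x hx
    have : x ∈ (U \ Y) \ {p, q} := ⟨⟨hOU hx'.1, fun h => hYO x h hx'.1⟩, by
      simp only [Set.mem_insert_iff, Set.mem_singleton_iff, not_or]; exact hx'.2⟩
    obtain ⟨C, hC, hxC⟩ := exists_comp (H := H) this
    exact ⟨C, hC, hxC, x, hxC, hx⟩
  have hZO : ∀ z ∈ Z, z ∈ O → z ∈ S := by
    intro z hzZ hzO
    have hzX := hZX z hzZ
    obtain ⟨C, hC, hz, s, hsC, hs⟩ := hzZ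
    by_contra hzS
    have hzp : pos z ≠ pos p := fun e => hzX.2.2.1 (hinj hzO hp e)
    have hzq : pos z ≠ pos q := fun e => hzX.2.2.2 (hinj hzO hq e)
    have hsO := (hSO s hs).1
    have hcY := hY.conn.add_pair hpY hqY
    have hdis : ∀ x ∈ Y ∪ {p, q}, x ∉ C := by
      intro x hx hxC
      have := hC.sub hxC
      grind
    have hsub : Y ∪ {p, q} ⊆ U := by
      rintro x (hx | rfl | rfl)
      · exact hYU x hx
      · exact hOU hp
      · exact hOU hq
    have hCU : C ⊆ U := fun x hx => (hC.sub hx).1.1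
    have hpm : p ∈ Y ∪ {p, q} := by simp
    have hqm : q ∈ Y ∪ {p, q} := by simp
    rcases hS with hS | hS
    · have h1 := (hS s).1 hs
      have h2 := mt (hS z).2 hzS
      refine hnc.cross hcY hC.conn hdis hsub hCU hp hq hsO hzO hpm hqm hsC hz h1.2.1 h1.2.2 ?_
      by_contra hcon
      exact h2 ⟨hzO, by omega, by omega⟩
    · have h1 := (hS s).1 hs
      have h2 := mt (hS z).2 hzS
      refine hnc.cross hcY hC.conn hdis hsub hCU hp hq hzO hsO hpm hqm hz hsC ?_ ?_ h1.2
      · by_contra hcon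
        exact h2 ⟨hzO, by omega⟩
      · by_contra hcon
        exact h2 ⟨hzO, by omega⟩
  refine soc_split ih hinj hnc hW hp hq hpq (U1 := Z ∪ {p, q}) (U2 := U \ Z) ?_ ?_ ?_ ?_ ?_
    (g1 := g) (g2 := y0) (Or.inl (hSZ g hg)) (fun h => h.2 (hSZ g hg))
    ⟨hYU y0 hy0, fun h => (hZX y0 h).2.1 hy0⟩ ?_
  · ext x
    have h1 := hZX x
    have := hOU hp
    have := hOU hq
    constructor
    · intro hx
      by_cases h : x ∈ Z
      · exact Or.inl (Or.inl h)
      · exact Or.inr ⟨hx, h⟩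
    · rintro ((h | rfl | rfl) | h)
      · exact (h1 h).1
      · exact hOU hp
      · exact hOU hq
      · exact h.1
  · ext x
    constructor
    · rintro ⟨h | h, h'⟩
      · exact absurd h h'.2
      · exact h
    · intro h
      refine ⟨Or.inr h, ?_, ?_⟩
      · rcases h with rfl | rfl
        · exact hOU hp
        · exact hOU hq
      · intro hx
        have := hZX x hx
        rcases h with rfl | rfl
        · exact this.2.2.1 rfl
        · exact this.2.2.2 rfl
  · rcases hS with hS | hS
    · left
      rintro x ⟨hxO, hx | rfl | rfl⟩
      · have := (hS x).1 (hZO x hx hxO)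
        omega
      · omega
      · omega
    · right
      rintro x ⟨hxO, hx | rfl | rfl⟩
      · have := (hS x).1 (hZO x hx hxO)
        omega
      · omega
      · omega
  · rcases hS with hS | hS
    · right
      rintro x ⟨hxO, hx⟩
      by_contra hcon
      exact hx.2 (hSZ x ((hS x).2 ⟨hxO, by omega, by omega⟩))
    · left
      rintro x ⟨hxO, hx⟩
      by_contra hcon
      exact hx.2 (hSZ x ((hS x).2 ⟨hxO, by omega⟩))
  · intro x hx hxp y hy hyp hxy
    have hxZ : x ∈ Z := hx.resolve_right hxp
    have hxX := hZX x hxZ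
    by_cases hyY : y ∈ Y
    · by_cases hxO : x ∈ O
      · exact hSA x (hZO x hxZ hxO) ⟨y, hyY, hxy.symm⟩
      · exact hxX.2.1 (hY.closed y hyY x ⟨hxX.1, hxO⟩ hxy.symm)
    · obtain ⟨C, hC, hxC, s⟩ := hxZ
      exact hy.2 ⟨C, hC, hC.closed x hxC y ⟨⟨hy.1, hyY⟩, hyp⟩ hxy, s⟩
  · rintro (h | h | h)
    · exact (hZX y0 h).2.1 hy0
    · exact hYO y0 hy0 (h ▸ hp)
    · exact hYO y0 hy0 (h ▸ hq)

lemma soc_b [Finite V] {n : ℕ} {U O : Set V} {pos : V → ℕ} (ih : SocBelow V n U.ncard)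
    (hOU : O ⊆ U) (hinj : Set.InjOn pos O) (hnc : NC H U O pos) (hW : W H n (U \ O) ∅)
    {Y : Set V} (hY : IsComp H (U \ O) Y) {g : V} (hg : g ∈ O) (hgY : ¬ ∃ y ∈ Y, H.Adj y g) :
    W H (n + 3) U ∅ := by
  have hYO : ∀ y ∈ Y, y ∉ O := fun y hy => (hY.sub hy).2
  have hYU : ∀ y ∈ Y, y ∈ U := fun y hy => (hY.sub hy).1
  obtain ⟨y0, hy0⟩ := hY.ne
  let A : Set V := {x | x ∈ O ∧ ∃ y ∈ Y, H.Adj y x}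
  have hAO : ∀ x ∈ A, x ∈ O := fun x hx => hx.1
  by_cases hA : A.ncard ≤ 1
  · have hcl : ∀ a ∈ A, ∀ b ∈ A, a ≠ b → H.Adj a b := by
      intro a ha b hb hab
      exact absurd ((Set.ncard_le_one (Set.toFinite A)).1 hA a ha b hb) hab
    refine W.glue (U1 := Y ∪ A) (U2 := U \ Y) (Q := A) ?_ ?_ hcl (by omega) ?_ ?_ ?_
    · ext x
      have := hYU x
      have := hAO x
      have := @hOU x
      grind
    · ext x
      have := hYU x
      have := hYO x
      have := hAO x
      have := @hOU x
      grind
    · intro x hx hxA y hy hyA hxy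
      have hxY := hx.resolve_right hxA
      by_cases hyO : y ∈ O
      · exact hyA ⟨hyO, x, hxY, hxy⟩
      · exact hy.2 (hY.closed x hxY y ⟨hy.1, hyO⟩ hxy)
    · have h1 := (hW.restrict Y).apex (Q := A) (k := 3) (by omega)
      have h2 : W H (n + 3) Y (∅ ∪ A) := h1.congr (by
        rw [Set.inter_eq_right]; exact hY.sub) (by simp)
      refine h2.intros ?_ ?_
      · rw [Set.disjoint_left]
        intro y hy hyA
        exact hYO y hy (hAO y hyA)
      · rw [Set.empty_union]; omega
    · refine ih H (U \ Y) O pos ?_ ?_ hinj (hnc.mono Set.sdiff_subset subset_rfl) ?_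
      · exact Set.ncard_lt_ncard ⟨Set.sdiff_subset, fun h => (h (hYU y0 hy0)).2 hy0⟩
      · exact fun x hx => ⟨hOU hx, fun h => hYO x h hx⟩
      · refine (hW.restrict (U \ Y)).congr ?_ (by simp)
        ext x; grind
  · push Not at hA
    obtain ⟨a, ha, b, hb, hab⟩ := (Set.one_lt_ncard (Set.toFinite A)).1 hA
    have hgne : ∀ x ∈ A, pos x ≠ pos g := by
      intro x hx e
      have := hinj hx.1 hg e
      subst this
      exact hgY hx.2
    by_cases hlow : ∃ x ∈ A, pos x < pos g
    · by_cases hhigh : ∃ x ∈ A, pos g < pos x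
      · obtain ⟨p, ⟨hpA, hpg⟩, hpm⟩ := Set.exists_max_image {x | x ∈ A ∧ pos x < pos g} pos
          (Set.toFinite _) hlow
        obtain ⟨q, ⟨hqA, hqg⟩, hqm⟩ := Set.exists_min_image {x | x ∈ A ∧ pos g < pos x} pos
          (Set.toFinite _) hhigh
        refine soc_b2 ih hOU hinj hnc hW hY hpA.1 hqA.1 (by omega) hpA.2 hqA.2
          (S := {x | x ∈ O ∧ pos p < pos x ∧ pos x < pos q}) (Or.inl fun x => Iff.rfl) ?_
          ⟨g, hg, hpg, hqg⟩
        rintro x ⟨hxO, h1, h2⟩ hx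
        have hxA : x ∈ A := ⟨hxO, hx⟩
        rcases lt_or_gt_of_ne (hgne x hxA) with h | h
        · have := hpm x ⟨hxA, h⟩
          omega
        · have := hqm x ⟨hxA, h⟩
          omega
      · push Not at hhigh
        obtain ⟨p, hpA, hpm⟩ := Set.exists_min_image A pos (Set.toFinite _) ⟨a, ha⟩
        obtain ⟨q, hqA, hqm⟩ := Set.exists_max_image A pos (Set.toFinite _) ⟨a, ha⟩
        have hne : pos a ≠ pos b := fun e => hab (hinj ha.1 hb.1 e)
        have h1 := hpm a ha
        have h2 := hpm b hb
        have h3 := hqm a ha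
        have h4 := hqm b hb
        refine soc_b2 ih hOU hinj hnc hW hY hpA.1 hqA.1 (by omega) hpA.2 hqA.2
          (S := {x | x ∈ O ∧ (pos x < pos p ∨ pos q < pos x)}) (Or.inr fun x => Iff.rfl) ?_
          ⟨g, hg, Or.inr ?_⟩
        · rintro x ⟨hxO, h1⟩ hx
          have h5 := hpm x ⟨hxO, hx⟩
          have h6 := hqm x ⟨hxO, hx⟩
          omega
        · have := hhigh q hqA
          have := hgne q hqA
          omega
    · push Not at hlow
      obtain ⟨p, hpA, hpm⟩ := Set.exists_min_image A pos (Set.toFinite _) ⟨a, ha⟩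
      obtain ⟨q, hqA, hqm⟩ := Set.exists_max_image A pos (Set.toFinite _) ⟨a, ha⟩
      have hne : pos a ≠ pos b := fun e => hab (hinj ha.1 hb.1 e)
      have h1 := hpm a ha
      have h2 := hpm b hb
      have h3 := hqm a ha
      have h4 := hqm b hb
      refine soc_b2 ih hOU hinj hnc hW hY hpA.1 hqA.1 (by omega) hpA.2 hqA.2
        (S := {x | x ∈ O ∧ (pos x < pos p ∨ pos q < pos x)}) (Or.inr fun x => Iff.rfl) ?_
        ⟨g, hg, Or.inl ?_⟩
      · rintro x ⟨hxO, h1⟩ hx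
        have h5 := hpm x ⟨hxO, hx⟩
        have h6 := hqm x ⟨hxO, hx⟩
        omega
      · have := hlow p hpA
        have := hgne p hpA
        omega

lemma soc_all [Finite V] {n : ℕ} {O : Set V} {pos : V → ℕ} (ih : SocBelow V n O.ncard)
    (hinj : Set.InjOn pos O) (hnc : NC H O O pos) (hO : 4 ≤ O.ncard) :
    W H (n + 3) O ∅ := by
  have key : ∀ p ∈ O, ∀ q ∈ O, pos p < pos q → ∀ r ∈ O, pos p < pos r → pos r < pos q →
      ∀ s ∈ O, (pos s < pos p ∨ pos q < pos s) →
      (∀ x ∈ O, pos p < pos x → pos x < pos q → ∀ y ∈ O, (pos y < pos p ∨ pos q < pos y) →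
        ¬ H.Adj x y) → W H (n + 3) O ∅ := by
    intro p hp q hq hpq r hr hr1 hr2 s hs hs1 hadj
    have hmem : ∀ x ∈ O, x ∉ ({p, q} : Set V) → pos x ≠ pos p ∧ pos x ≠ pos q := by
      intro x hx hx'
      simp only [Set.mem_insert_iff, Set.mem_singleton_iff, not_or] at hx'
      exact ⟨fun e => hx'.1 (hinj hx hp e), fun e => hx'.2 (hinj hx hq e)⟩
    refine soc_split ih hinj hnc ((W.nil ∅).congr (by simp) rfl) hp hq hpq
      (U1 := {x | x ∈ O ∧ pos p ≤ pos x ∧ pos x ≤ pos q})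
      (U2 := {x | x ∈ O ∧ (pos x ≤ pos p ∨ pos q ≤ pos x)}) ?_ ?_ ?_ ?_ ?_ (g1 := r) (g2 := s)
      ⟨hr, by omega, by omega⟩ (fun h => by have := h.2; omega) ⟨hs, by omega⟩
      (fun h => by have := h.2; omega)
    · ext x
      simp only [Set.mem_union, Set.mem_ofPred_eq]
      constructor
      · intro hx
        by_cases h : pos p ≤ pos x ∧ pos x ≤ pos q
        · exact Or.inl ⟨hx, h⟩
        · exact Or.inr ⟨hx, by omega⟩
      · tauto
    · ext x
      simp only [Set.mem_inter_iff, Set.mem_ofPred_eq]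
      constructor
      · rintro ⟨h1, h2⟩
        by_contra hx
        have := hmem x h1.1 hx
        omega
      · rintro (rfl | rfl)
        · exact ⟨⟨hp, by omega⟩, hp, by omega⟩
        · exact ⟨⟨hq, by omega⟩, hq, by omega⟩
    · left
      rintro x ⟨-, hx⟩
      exact hx.2
    · right
      rintro x ⟨-, hx⟩
      exact hx.2
    · rintro x ⟨hx, hx1⟩ hxp y ⟨hy, hy1⟩ hyp
      have h1 := hmem x hx hxp
      have h2 := hmem y hy hyp
      exact hadj x hx (by omega) (by omega) y hy (by omega)
  obtain ⟨o, ho, hlt, -⟩ := enum_O O pos hinj (by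
    rw [← Set.ncard_pos]; omega)
  have h01 := hlt 0 1 (by omega) (by omega)
  have h12 := hlt 1 2 (by omega) (by omega)
  have h23 := hlt 2 3 (by omega) (by omega)
  by_cases hbad : ∃ p ∈ O, ∃ q ∈ O, pos p < pos q ∧ H.Adj p q ∧ (∃ r ∈ O, pos p < pos r ∧ pos r < pos q) ∧
    ∃ s ∈ O, (pos s < pos p ∨ pos q < pos s)
  · obtain ⟨p, hp, q, hq, hpq, hadj, ⟨r, hr, hr1, hr2⟩, s, hs, hs1⟩ := hbad
    refine key p hp q hq hpq r hr hr1 hr2 s hs hs1 ?_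
    intro x hx hx1 hx2 y hy hy1 hxy
    refine hnc.cross (Conn.pair hadj) (Conn.pair hxy) ?_ ?_ ?_ hp hq hx hy (by simp) (by simp) (by simp)
      (by simp) hx1 hx2 hy1
    · rintro z (rfl | rfl) (rfl | rfl) <;> omega
    · rintro z (rfl | rfl) <;> assumption
    · rintro z (rfl | rfl) <;> assumption
  · refine key (o 0) (ho 0 (by omega)) (o 2) (ho 2 (by omega)) (by omega) (o 1) (ho 1 (by omega)) h01
      h12 (o 3) (ho 3 (by omega)) (Or.inr h23) ?_
    intro x hx hx1 hx2 y hy hy1 hxy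
    apply hbad
    rcases hy1 with hy1 | hy1
    · exact ⟨y, hy, x, hx, by omega, hxy.symm, ⟨o 0, ho 0 (by omega), by omega, by omega⟩, o 2,
        ho 2 (by omega), by omega⟩
    · exact ⟨x, hx, y, hy, by omega, hxy, ⟨o 2, ho 2 (by omega), by omega, by omega⟩, o 0,
        ho 0 (by omega), by omega⟩

lemma soc_ring [Finite V] {n : ℕ} {U O Y : Set V} {pos : V → ℕ} (hOU : O ⊆ U)
    (hinj : Set.InjOn pos O) (hnc : NC H U O pos) (hO : 4 ≤ O.ncard) (hY : Conn H Y)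
    (hYU : U \ O = Y) (hA : ∀ x ∈ O, ∃ y ∈ Y, H.Adj y x) (hW : W H n (U \ O) ∅) :
    W H (n + 3) U ∅ := by
  obtain ⟨o, ho, hlt, hsurj⟩ := enum_O O pos hinj (by rw [← Set.ncard_pos]; omega)
  set N := O.ncard with hN
  have hYO : ∀ y ∈ Y, y ∈ U ∧ y ∉ O := fun y hy => by rw [← hYU] at hy; exact hy
  let o' : ℕ → V := fun k => if k = N then o 0 else o k
  have ho' : ∀ k, k < N → o' k = o k := fun k hk => by simp [o', hk.ne]
  have hoN : o' N = o 0 := by simp [o']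
  have hoO : ∀ k ≤ N, o' k ∈ O := by
    intro k hk
    rcases hk.lt_or_eq with h | rfl
    · rw [ho' k h]; exact ho k h
    · rw [hoN]; exact ho 0 (by omega)
  have hne : ∀ i j, i < j → j < N → o i ≠ o j := fun i j hij hj e => by
    have := hlt i j hij hj
    rw [e] at this
    omega
  have hr : Ring H o' N Y := by
    refine ⟨hO, ?_, ?_, hY, ?_, ?_, ?_, ?_, ?_⟩
    · intro i hi j hj e
      rw [ho' i hi, ho' j hj] at e
      rcases lt_trichotomy i j with h | h | h
      · exact absurd e (hne i j h hj)
      · exact h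
      · exact absurd e.symm (hne j i h hi)
    · rw [hoN, ho' 0 (by omega)]
    · intro k hk h
      exact (hYO _ h).2 (hoO k hk)
    · intro k hk
      exact hA _ (hoO k hk)
    · intro a b ha hab hb hadj
      rw [ho' a (by omega), ho' b hb] at hadj
      by_contra hcon
      refine hnc (Y ∪ {o 0, o (a + 1)}) {o a, o b} (hY.add_pair (hA _ (ho 0 (by omega)))
        (hA _ (ho (a + 1) (by omega)))) (Conn.pair hadj) ?_ ?_ ?_ (o 0) (ho 0 (by omega)) (o a)
        (ho a (by omega)) (o (a + 1)) (ho _ (by omega)) (o b) (ho b hb) (hlt _ _ ha (by omega))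
        (hlt _ _ (by omega) (by omega)) (hlt _ _ (by omega) (by omega)) (by simp) (by simp) (by simp)
        (by simp)
      · rw [Set.disjoint_left]
        rintro x (hx | rfl | rfl) (h | h)
        · exact (hYO _ hx).2 (h ▸ ho a (by omega))
        · exact (hYO _ hx).2 (h ▸ ho b (by omega))
        · exact hne 0 a ha (by omega) h
        · exact hne 0 b (by omega) (by omega) h
        · exact hne a (a + 1) (by omega) (by omega) h.symm
        · exact hne (a + 1) b (by omega) (by omega) h
      · rintro x (hx | rfl | rfl)
        · exact (hYO _ hx).1
        · exact hOU (ho _ (by omega))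
        · exact hOU (ho _ (by omega))
      · rintro x (rfl | rfl)
        · exact hOU (ho _ (by omega))
        · exact hOU (ho _ (by omega))
    · intro a ha haN hadj
      rw [ho' a (by omega), ho' 0 (by omega)] at hadj
      by_contra hcon
      refine hnc {o 0, o a} (Y ∪ {o 1, o (N - 1)}) (Conn.pair hadj) (hY.add_pair (hA _ (ho 1 (by omega)))
        (hA _ (ho (N - 1) (by omega))))  ?_ ?_ ?_ (o 0) (ho 0 (by omega)) (o 1)
        (ho 1 (by omega)) (o a) (ho _ (by omega)) (o (N - 1)) (ho _ (by omega)) (hlt _ _ (by omega) (by omega))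
        (hlt _ _ (by omega) (by omega)) (hlt _ _ (by omega) (by omega)) (by simp) (by simp) (by simp)
        (by simp)
      · rw [Set.disjoint_right]
        rintro x (hx | rfl | rfl) (h | h)
        · exact (hYO _ hx).2 (h ▸ ho 0 (by omega))
        · exact (hYO _ hx).2 (h ▸ ho a (by omega))
        · exact hne 0 1 (by omega) (by omega) h.symm
        · exact hne 1 a (by omega) (by omega) h
        · exact hne 0 (N - 1) (by omega) (by omega) h.symm
        · exact hne a (N - 1) (by omega) (by omega) h.symm
      · rintro x (rfl | rfl)
        · exact hOU (ho _ (by omega))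
        · exact hOU (ho _ (by omega))
      · rintro x (hx | rfl | rfl)
        · exact (hYO _ hx).1
        · exact hOU (ho _ (by omega))
        · exact hOU (ho _ (by omega))
    · intro C D hC hD hdis hCY hDY a b c d hab hbc hcd hdN hCa hDb hCc hDd
      unfold Att at hCa hDb hCc hDd
      rw [ho' a (by omega)] at hCa
      rw [ho' b (by omega)] at hDb
      rw [ho' c (by omega)] at hCc
      rw [ho' d (by omega)] at hDd
      refine hnc (C ∪ {o a, o c}) (D ∪ {o b, o d}) (hC.add_pair hCa hCc) (hD.add_pair hDb hDd) ?_ ?_ ?_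
        (o a) (ho _ (by omega)) (o b) (ho _ (by omega)) (o c) (ho _ (by omega)) (o d) (ho _ (by omega))
        (hlt _ _ (by omega) (by omega)) (hlt _ _ (by omega) (by omega)) (hlt _ _ (by omega) (by omega))
        (by simp) (by simp) (by simp) (by simp)
      · rw [Set.disjoint_left] at hdis ⊢
        have e1 := hne a b (by omega) (by omega)
        have e2 := hne a d (by omega) (by omega)
        have e3 := hne b c (by omega) (by omega)
        have e4 := hne c d (by omega) (by omega)
        rintro x (hx | hx) (h | h)
        · exact hdis hx h
        · rcases h with h | h
          · exact (hYO x (hCY hx)).2 (h ▸ ho b (by omega))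
          · exact (hYO x (hCY hx)).2 (h ▸ ho d (by omega))
        · rcases hx with hx | hx
          · exact (hYO x (hDY h)).2 (hx ▸ ho a (by omega))
          · exact (hYO x (hDY h)).2 (hx ▸ ho c (by omega))
        · rcases hx with rfl | rfl <;> rcases h with h | h
          · exact e1 h
          · exact e2 h
          · exact e3 h.symm
          · exact e4 h
      · rintro x (hx | rfl | rfl)
        · exact (hYO _ (hCY hx)).1
        · exact hOU (ho _ (by omega))
        · exact hOU (ho _ (by omega))
      · rintro x (hx | rfl | rfl)
        · exact (hYO _ (hDY hx)).1
        · exact hOU (ho _ (by omega))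
        · exact hOU (ho _ (by omega))
  refine (core hr (hW.congr hYU rfl)).congr ?_ rfl
  ext x
  constructor
  · rintro (hx | ⟨k, hk, rfl⟩)
    · exact (hYO x hx).1
    · exact hOU (hoO k hk.le)
  · intro hx
    by_cases hxO : x ∈ O
    · obtain ⟨k, hk, rfl⟩ := hsurj x hxO
      exact Or.inr ⟨k, hk, (ho' k hk).symm⟩
    · left
      rw [← hYU]
      exact ⟨hx, hxO⟩

theorem soc [Finite V] (n m : ℕ) : SocBelow V n m := by
  induction m with
  | zero => intro H U O pos h; omega
  | succ m ihm =>
    intro H U O pos hlt hOU hinj hnc hW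
    have ih : SocBelow V n U.ncard := by
      intro H' U' O' pos' h'
      exact ihm H' U' O' pos' (by omega)
    by_cases hO : O.ncard ≤ 3
    · have h1 := (hW.apex (Q := O) (k := 3) hO).intros (Set.disjoint_left.2 fun x hx => hx.2)
        (by rw [Set.empty_union]; omega)
      refine h1.congr ?_ rfl
      rw [Set.sdiff_union_of_subset hOU]
    by_cases hb : ∃ Y, IsComp H (U \ O) Y ∧ ∃ g ∈ O, ¬ ∃ y ∈ Y, H.Adj y g
    · obtain ⟨Y, hY, g, hg, hgY⟩ := hb
      exact soc_b ih hOU hinj hnc hW hY hg hgY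
    push Not at hb
    by_cases hne : (U \ O).Nonempty
    · obtain ⟨y, hy⟩ := hne
      obtain ⟨Y, hY, hyY⟩ := exists_comp (H := H) hy
      refine soc_ring hOU hinj hnc (by omega) hY.conn ?_ (fun x hx => hb Y hY x hx) hW
      refine Set.Subset.antisymm ?_ hY.sub
      intro z hz
      by_contra hzY
      obtain ⟨Z, hZ, hzZ⟩ := exists_comp (H := H) hz
      have hYZ : Y ≠ Z := by rintro rfl; exact hzY hzZ
      have hd := hY.disj hZ hYZ
      obtain ⟨o, ho, hlt, hsurj⟩ := enum_O O pos hinj (by rw [← Set.ncard_pos]; omega)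
      have o0 := ho 0 (by omega)
      have o1 := ho 1 (by omega)
      have o2 := ho 2 (by omega)
      have o3 := ho 3 (by omega)
      have h01 := hlt 0 1 (by omega) (by omega)
      have h12 := hlt 1 2 (by omega) (by omega)
      have h23 := hlt 2 3 (by omega) (by omega)
      refine hnc (Y ∪ {o 0, o 2}) (Z ∪ {o 1, o 3}) (hY.conn.add_pair (hb Y hY _ o0) (hb Y hY _ o2))
        (hZ.conn.add_pair (hb Z hZ _ o1) (hb Z hZ _ o3)) ?_ ?_ ?_ _ o0 _ o1 _ o2 _ o3 h01 h12 h23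
        (by simp) (by simp) (by simp) (by simp)
      · rw [Set.disjoint_left] at hd ⊢
        rintro x (hx | hx) (h | h)
        · exact hd hx h
        · rcases h with h | h
          · exact (hY.sub hx).2 (h ▸ o1)
          · exact (hY.sub hx).2 (h ▸ o3)
        · rcases hx with hx | hx
          · exact (hZ.sub h).2 (hx ▸ o0)
          · exact (hZ.sub h).2 (hx ▸ o2)
        · rcases hx with rfl | rfl <;> rcases h with h | h <;> have h' := congrArg pos h <;> omega
      · rintro x (hx | rfl | rfl)
        · exact (hY.sub hx).1
        · exact hOU o0
        · exact hOU o2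
      · rintro x (hx | rfl | rfl)
        · exact (hZ.sub hx).1
        · exact hOU o1
        · exact hOU o3
    · have hUO : U = O := by
        refine Set.Subset.antisymm ?_ hOU
        intro x hx
        by_contra h
        exact hne ⟨x, hx, h⟩
      subst hUO
      exact soc_all ih hinj hnc (by omega)

end soc2
end KO
namespace KO

section menger
variable {V : Type} {H : SimpleGraph V}

/-- no separations of order at most one -/
def TwoConn (H : SimpleGraph V) (U : Set V) : Prop :=
  ∀ U1 U2 : Set V, U = U1 ∪ U2 → (U1 ∩ U2).ncard ≤ 1 →
    (∀ x ∈ U1, x ∉ U2 → ∀ y ∈ U2, y ∉ U1 → ¬ H.Adj x y) → U1 = U ∨ U2 = U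

lemma TwoConn.sep {U : Set V} (h : TwoConn H U) {U1 U2 : Set V} {v g1 g2 : V}
    (hU : U = U1 ∪ U2) (hv : ∀ x, x ∈ U1 → x ∈ U2 → x = v)
    (hadj : ∀ x ∈ U1, x ∉ U2 → ∀ y ∈ U2, y ∉ U1 → ¬ H.Adj x y)
    (hg1 : g1 ∈ U1) (hg1' : g1 ∉ U2) (hg2 : g2 ∈ U2) (hg2' : g2 ∉ U1) : False := by
  have hc : (U1 ∩ U2).ncard ≤ 1 := by
    have : (U1 ∩ U2) ⊆ {v} := fun x hx => hv x hx.1 hx.2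
    calc _ ≤ _ := Set.ncard_le_ncard this (Set.finite_singleton v)
      _ = 1 := Set.ncard_singleton v
  rcases h U1 U2 hU hc hadj with h | h
  · apply hg2'
    rw [h, hU]
    exact Or.inr hg2
  · apply hg1'
    rw [h, hU]
    exact Or.inl hg1

lemma TwoConn.conn_erase {U : Set V} (h : TwoConn H U) {a b : V} (ha : a ∈ U) (hb : b ∈ U)
    (hab : b ≠ a) : Conn H (U \ {a}) := by
  obtain ⟨K, hK, hbK⟩ := exists_comp (H := H) (X := U \ {a}) (x := b) ⟨hb, hab⟩
  by_cases hKU : U \ {a} ⊆ K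
  · rw [Set.Subset.antisymm hKU hK.sub]
    exact hK.conn
  · exfalso
    obtain ⟨g, hg, hgK⟩ := Set.not_subset.1 hKU
    have haK : a ∉ K := fun h => (hK.sub h).2 rfl
    refine h.sep (U1 := insert a K) (U2 := U \ K) (v := a) (g1 := b) (g2 := g) ?_ ?_ ?_
      (Or.inr hbK) (fun h => h.2 hbK) ⟨hg.1, hgK⟩ ?_
    · ext x
      have : x ∈ K → x ∈ U \ {a} := fun h => hK.sub h
      grind
    · intro x hx hx'
      exact hx.resolve_right hx'.2
    · intro x hx hx' y hy hy' hxy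
      rcases hx with rfl | hx
      · exact hx' ⟨ha, haK⟩
      · have hya : y ≠ a := fun e => hy' (Or.inl e)
        exact hy.2 (hK.closed x hx y ⟨hy.1, hya⟩ hxy)
    · rintro (h | h)
      · exact hg.2 h
      · exact hgK h

lemma TwoConn.menger [Finite V] {U : Set V} (h : TwoConn H U) {a b c d : V} (ha : a ∈ U)
    (hb : b ∈ U) (hc : c ∈ U) (hd : d ∈ U) (hab : a ≠ b) (hac : a ≠ c) (had : a ≠ d)
    (hbc : b ≠ c) (hbd : b ≠ d) (hcd : c ≠ d) :
    ∃ A B, Conn H A ∧ Conn H B ∧ Disjoint A B ∧ A ⊆ U ∧ B ⊆ U ∧ a ∈ A ∧ b ∈ B ∧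
      ((c ∈ A ∧ d ∈ B) ∨ (d ∈ A ∧ c ∈ B)) := by
  obtain ⟨A, ⟨hA, hB, hAU, haA, hbA, hcA, hdA⟩, hmax⟩ := Set.exists_max_image
    {A : Set V | Conn H A ∧ Conn H (U \ A) ∧ A ⊆ U ∧ a ∈ A ∧ b ∉ A ∧ c ∉ A ∧ d ∉ A} Set.ncard
    (Set.toFinite _) ⟨{a}, Conn.singleton a, h.conn_erase ha hb hab.symm, by simpa using ha, rfl,
      fun e => hab e.symm, fun e => hac e.symm, fun e => had e.symm⟩
  obtain ⟨v0, hv0, hv0b, hv0A⟩ : ∃ v ∈ U \ A, v ≠ b ∧ ∃ x ∈ A, H.Adj x v := by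
    by_contra hcon
    push Not at hcon
    refine h.sep (U1 := insert b A) (U2 := U \ A) (v := b) (g1 := a) (g2 := c) ?_ ?_ ?_
      (Or.inr haA) (fun h => h.2 haA) ⟨hc, hcA⟩ ?_
    · ext x
      have := @hAU x
      grind
    · intro x hx hx'
      exact hx.resolve_right hx'.2
    · intro x hx hx' y hy hy' hxy
      rcases hx with rfl | hx
      · exact hx' ⟨hb, hbA⟩
      · exact hcon y hy (fun e => hy' (Or.inl e)) x hx hxy
    · rintro (h | h)
      · exact hbc h.symm
      · exact hcA h
  obtain ⟨K0, hK0, hbK0⟩ := exists_comp (H := H) (X := (U \ A) \ {v0}) (x := b)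
    ⟨⟨hb, hbA⟩, fun e => hv0b e.symm⟩
  obtain ⟨⟨v, K⟩, ⟨hv, ⟨x0, hx0, hx0v⟩, hK, hbK⟩, hKmax⟩ := Set.exists_max_image
    {p : V × Set V | p.1 ∈ U \ A ∧ (∃ x ∈ A, H.Adj x p.1) ∧ IsComp H ((U \ A) \ {p.1}) p.2 ∧ b ∈ p.2}
    (fun p => p.2.ncard) (Set.toFinite _) ⟨(v0, K0), hv0, hv0A, hK0, hbK0⟩
  dsimp only at hv hx0v hK hbK
  have hvK : v ∉ K := fun h => (hK.sub h).2 rfl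
  have hKB : K ⊆ U \ A := fun x hx => (hK.sub hx).1
  have hKeq : (U \ A) \ {v} = K := by
    refine Set.Subset.antisymm ?_ hK.sub
    by_contra hcon
    obtain ⟨g, hg, hgK⟩ := Set.not_subset.1 hcon
    -- a vertex beyond `v` adjacent to `A`
    obtain ⟨w, hw, hwv, hwK, hwA⟩ : ∃ w ∈ U \ A, w ≠ v ∧ w ∉ K ∧ ∃ x ∈ A, H.Adj x w := by
      by_contra hcon2
      push Not at hcon2
      refine h.sep (U1 := K ∪ A ∪ {v}) (U2 := (U \ A) \ K) (v := v) (g1 := b) (g2 := g) ?_ ?_ ?_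
        (Or.inl (Or.inl hbK)) (fun h => h.2 hbK) ⟨hg.1, hgK⟩ ?_
      · ext x
        have h1 := @hKB x
        have h2 := @hAU x
        have h3 := hv.1
        grind
      · rintro x ((hx | hx) | hx) hx'
        · exact absurd hx hx'.2
        · exact absurd hx hx'.1.2
        · exact hx
      · rintro x ((hx | hx) | hx) hx' y hy hy' hxy
        · have hyv : y ≠ v := fun e => hy' (Or.inr e)
          exact hy.2 (hK.closed x hx y ⟨hy.1, hyv⟩ hxy)
        · have hyv : y ≠ v := fun e => hy' (Or.inr e)
          exact hcon2 y hy.1 hyv hy.2 x hx hxy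
        · rcases hx with rfl
          exact hx' ⟨hv, hvK⟩
      · rintro ((h | h) | h)
        · exact hgK h
        · exact hg.1.2 h
        · exact hg.2 h
    have hwb : w ≠ b := fun e => hwK (e ▸ hbK)
    obtain ⟨K', hK', hbK'⟩ := exists_comp (H := H) (X := (U \ A) \ {w}) (x := b)
      ⟨⟨hb, hbA⟩, fun e => hwb e.symm⟩
    have hle := hKmax (w, K') ⟨hw, hwA, hK', hbK'⟩
    dsimp only at hle
    have hKK' : K ⊆ K' := by
      refine hK'.conn_sub hK.conn ?_ hbK hbK'
      intro x hx
      exact ⟨hKB hx, fun e => hwK (e ▸ hx)⟩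
    -- `v` is adjacent to `K`
    have hvK' : v ∈ K' := by
      by_contra hvK'
      apply hvK
      refine hB.2 K hKB ⟨b, hbK⟩ ?_ hv
      intro x hx y hy hxy
      by_cases hyv : y = v
      · subst hyv
        exact absurd (hK'.closed x (hKK' hx) y ⟨hy, fun e => hwv e.symm⟩ hxy) hvK'
      · exact hK.closed x hx y ⟨hy, hyv⟩ hxy
    have : K.ncard < K'.ncard := Set.ncard_lt_ncard ⟨hKK', fun h => hvK (h hvK')⟩
    omega
  have hKU : U \ (insert v A) = K := by
    rw [← hKeq]; ext x; grind
  have hAv : Conn H (insert v A) := hA.insert_adj hx0 hx0v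
  have hAvU : insert v A ⊆ U := by
    rintro x (rfl | hx)
    · exact hv.1
    · exact hAU hx
  have hmemK : ∀ x ∈ U, x ∉ A → x ≠ v → x ∈ K := by
    intro x hx hxA hxv
    rw [← hKeq]
    exact ⟨⟨hx, hxA⟩, hxv⟩
  have hdis : Disjoint (insert v A) K := by
    rw [← hKU]; exact Set.disjoint_sdiff_right
  by_cases hvc : v = c
  · subst hvc
    exact ⟨insert v A, K, hAv, hK.conn, hdis, hAvU, fun x hx => (hKB hx).1, Or.inr haA, hbK,
      Or.inl ⟨Or.inl rfl, hmemK d hd hdA hcd.symm⟩⟩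
  by_cases hvd : v = d
  · subst hvd
    exact ⟨insert v A, K, hAv, hK.conn, hdis, hAvU, fun x hx => (hKB hx).1, Or.inr haA, hbK,
      Or.inr ⟨Or.inl rfl, hmemK c hc hcA hcd⟩⟩
  exfalso
  have hvb : v ≠ b := fun e => hvK (e ▸ hbK)
  have := hmax (insert v A) ⟨hAv, by rw [hKU]; exact hK.conn, hAvU, Or.inr haA, ?_, ?_, ?_⟩
  · rw [Set.ncard_insert_of_notMem hv.2] at this
    omega
  · rintro (e | e)
    · exact hvb e.symm
    · exact hbA e
  · rintro (e | e)
    · exact hvc e.symm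
    · exact hcA e
  · rintro (e | e)
    · exact hvd e.symm
    · exact hdA e

lemma zcases (x : ZMod 2) : x = 0 ∨ x = 1 := by revert x; decide

/-- Abstract form of the main step. -/
theorem main_abs [Finite V] {O : Set V} (L : V → V → ZMod 2)
    (hanti : ∀ a ∈ O, ∀ b ∈ O, a ≠ b → L a b + L b a = 1)
    (hpar : ∀ A B, Conn H A → Conn H B → Disjoint A B → ∀ a ∈ O, ∀ b ∈ O, ∀ c ∈ O, ∀ d ∈ O,
      a ∈ A → c ∈ A → b ∈ B → d ∈ B → L a b + L c b + L a d + L c d = 0)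
    (n m : ℕ) : ∀ U : Set V, U.ncard < m → W H n (U \ O) ∅ → W H (n + 3) U ∅ := by
  induction m with
  | zero => intro U h; omega
  | succ m ih =>
    intro U hUm hW
    by_cases h2 : TwoConn H U
    · by_cases hne : (O ∩ U).Nonempty
      · obtain ⟨z, hz⟩ := hne
        classical
        let h : V → ZMod 2 := fun a => if a = z then 0 else L z a + 1
        let L' : V → V → ZMod 2 := fun a b => L a b + h a + h b
        have hanti' : ∀ a ∈ O, ∀ b ∈ O, a ≠ b → L' a b + L' b a = 1 := by
          intro a ha b hb hab
          have := hanti a ha b hb hab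
          simp only [L']
          generalize L a b = x at *
          generalize L b a = y at *
          generalize h a = u at *
          generalize h b = v at *
          revert x y u v
          decide
        have hpar' : ∀ A B, Conn H A → Conn H B → Disjoint A B → ∀ a ∈ O, ∀ b ∈ O, ∀ c ∈ O, ∀ d ∈ O,
            a ∈ A → c ∈ A → b ∈ B → d ∈ B → L' a b + L' c b + L' a d + L' c d = 0 := by
          intro A B hA hB hd a ha b hb c hc d hd' haA hcA hbB hdB
          have := hpar A B hA hB hd a ha b hb c hc d hd' haA hcA hbB hdB
          simp only [L']
          have h2 : ∀ x : ZMod 2, x + x = 0 := by decide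
          linear_combination this + h2 (h a) + h2 (h b) + h2 (h c) + h2 (h d)
        have hz1 : ∀ a, a ≠ z → L' z a = 1 := by
          intro a ha
          simp only [L', h, if_neg ha, if_true]
          generalize L z a = x
          revert x
          decide
        have hsw : ∀ a ∈ O, ∀ b ∈ O, a ≠ b → (L' a b = 1 ↔ L' b a = 0) := by
          intro a ha b hb hab
          have := hanti' a ha b hb hab
          generalize L' a b = x at *
          generalize L' b a = y at *
          revert x y
          decide
        let R : V → V → Prop := fun a b => a ≠ b ∧ L' a b = 1
        have hRtot : ∀ a ∈ O, ∀ b ∈ O, a ≠ b → R a b ∨ R b a := by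
          intro a ha b hb hab
          rcases zcases (L' a b) with h | h
          · exact Or.inr ⟨hab.symm, (hsw b hb a ha hab.symm).2 h⟩
          · exact Or.inl ⟨hab, h⟩
        have hRas : ∀ a ∈ O, ∀ b ∈ O, R a b → R b a → False := by
          intro a ha b hb h1 h2
          have := (hsw a ha b hb h1.1).1 h1.2
          rw [h2.2] at this
          exact absurd this (by decide)
        have hRtr : ∀ a ∈ O ∩ U, ∀ b ∈ O ∩ U, ∀ c ∈ O ∩ U, R a b → R b c → R a c := by
          intro a ha b hb c hc hab hbc
          have hac : a ≠ c := by
            rintro rfl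
            exact hRas a ha.1 b hb.1 hab hbc
          rcases hRtot a ha.1 c hc.1 hac with h | hca
          · exact h
          exfalso
          have hz0 : ∀ x ∈ O, ¬ R x z := by
            intro x hx hxz
            have := (hsw x hx z hz.1 hxz.1).1 hxz.2
            rw [hz1 x hxz.1] at this
            exact absurd this (by decide)
          have haz : a ≠ z := by rintro rfl; exact hz0 c hc.1 hca
          have hbz : b ≠ z := by rintro rfl; exact hz0 a ha.1 hab
          have hcz : c ≠ z := by rintro rfl; exact hz0 b hb.1 hbc
          have ba := (hsw a ha.1 b hb.1 hab.1).1 hab.2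
          have cb := (hsw b hb.1 c hc.1 hbc.1).1 hbc.2
          obtain ⟨A, B, hA, hB, hd, -, -, hzA, haB, ⟨h1, h2⟩ | ⟨h1, h2⟩⟩ := h2.menger hz.2 ha.2 hb.2 hc.2
            haz.symm hbz.symm hcz.symm hab.1 hac hbc.1
          · have := hpar' A B hA hB hd z hz.1 a ha.1 b hb.1 c hc.1 hzA h1 haB h2
            rw [hz1 a haz, hz1 c hcz, ba, hbc.2] at this
            exact absurd this (by decide)
          · have := hpar' A B hA hB hd z hz.1 a ha.1 c hc.1 b hb.1 hzA h1 haB h2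
            rw [hz1 a haz, hz1 b hbz, hca.2, cb] at this
            exact absurd this (by decide)
        let pos : V → ℕ := fun v => {w | w ∈ O ∩ U ∧ R w v}.ncard
        have hmono : ∀ a ∈ O ∩ U, ∀ b ∈ O ∩ U, R a b → pos a < pos b := by
          intro a ha b hb hab
          refine Set.ncard_lt_ncard ⟨?_, ?_⟩
          · rintro w ⟨hw, hwa⟩
            exact ⟨hw, hRtr w hw a ha b hb hwa hab⟩
          · intro hsub
            exact (hsub (show a ∈ _ from ⟨ha, hab⟩)).2.1 rfl
        have hinj : Set.InjOn pos (O ∩ U) := by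
          intro a ha b hb e
          by_contra hab
          rcases hRtot a ha.1 b hb.1 hab with h | h
          · have := hmono a ha b hb h
            omega
          · have := hmono b hb a ha h
            omega
        have hposR : ∀ a ∈ O ∩ U, ∀ b ∈ O ∩ U, pos a < pos b → L' a b = 1 ∧ L' b a = 0 := by
          intro a ha b hb hlt
          have hab : a ≠ b := by rintro rfl; omega
          rcases hRtot a ha.1 b hb.1 hab with h | h
          · exact ⟨h.2, (hsw a ha.1 b hb.1 hab).1 h.2⟩
          · have := hmono b hb a ha h
            omega
        refine soc n _ H U (O ∩ U) pos (Nat.lt_succ_self _) Set.inter_subset_right hinj ?_ ?_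
        · intro A B hA hB hd hAU hBU a ha b hb c hc d hd' hab hbc hcd haA hbB hcA hdB
          have := hpar' A B hA hB hd a ha.1 b hb.1 c hc.1 d hd'.1 haA hcA hbB hdB
          rw [(hposR a ha b hb hab).1, (hposR b hb c hc hbc).2, (hposR a ha d hd' (by omega)).1,
            (hposR c hc d hd' hcd).1] at this
          exact absurd this (by decide)
        · refine hW.congr ?_ rfl
          ext x; grind
      · refine (hW.congr ?_ rfl).le (by omega)
        ext x
        constructor
        · exact fun hx => hx.1
        · exact fun hx => ⟨hx, fun hO => hne ⟨x, hO, hx⟩⟩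
    · unfold TwoConn at h2
      push Not at h2
      obtain ⟨U1, U2, hU, hc, hadj, hn1, hn2⟩ := h2
      have s1 : U1 ⊆ U := by rw [hU]; exact Set.subset_union_left
      have s2 : U2 ⊆ U := by rw [hU]; exact Set.subset_union_right
      have key : ∀ U', U' ⊆ U → U' ≠ U → W H (n + 3) U' ∅ := by
        intro U' hs hne
        refine ih U' ?_ ?_
        · have := Set.ncard_lt_ncard (hs.ssubset_of_ne hne)
          omega
        · refine (hW.restrict U').congr ?_ (by simp)
          ext x
          have := @hs x
          grind
      refine W.glue hU rfl ?_ (by omega) ?_ (key U1 s1 hn1) (key U2 s2 hn2)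
      · intro a ha b hb hab
        exact absurd ((Set.ncard_le_one (Set.toFinite _)).1 hc a ha b hb) hab
      · intro x hx hx' y hy hy'
        exact hadj x hx (fun h => hx' ⟨hx, h⟩) y hy (fun h => hy' ⟨h, hy⟩)

end menger
end KO
namespace KO

section geo

/-- height of the line through `p` and `q` over `x` -/
noncomputable def lv (p q : ℝ × ℝ) (x : ℝ) : ℝ := p.2 + (x - p.1) * ((q.2 - p.2) / (q.1 - p.1))

/-- strictly between -/
def inr (a b x : ℝ) : Prop := (a < x ∧ x < b) ∨ (b < x ∧ x < a)

open Classical in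
/-- `s` is below the segment `pq` -/
noncomputable def up (s p q : ℝ × ℝ) : ZMod 2 :=
  if inr p.1 q.1 s.1 ∧ s.2 < lv p q s.1 then 1 else 0

open Classical in
/-- `s` is above (or on) the segment `pq` -/
noncomputable def ab (s p q : ℝ × ℝ) : ZMod 2 :=
  if inr p.1 q.1 s.1 ∧ ¬ s.2 < lv p q s.1 then 1 else 0

/-- the segments `pq` and `st` are disjoint -/
def Disj (p q s t : ℝ × ℝ) : Prop :=
  ∀ α β : ℝ, 0 ≤ α → α ≤ 1 → 0 ≤ β → β ≤ 1 → p + α • (q - p) ≠ s + β • (t - s)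

lemma Disj.symm {p q s t : ℝ × ℝ} (h : Disj p q s t) : Disj s t p q :=
  fun α β h1 h2 h3 h4 e => h β α h3 h4 h1 h2 e.symm

lemma Disj.swap {p q s t : ℝ × ℝ} (h : Disj p q s t) : Disj q p s t := by
  intro α β h1 h2 h3 h4 e
  refine h (1 - α) β (by linarith) (by linarith) h3 h4 ?_
  rw [← e]
  module

lemma inr_comm (a b x : ℝ) : inr a b x ↔ inr b a x := or_comm

lemma lv_comm {p q : ℝ × ℝ} (h : p.1 ≠ q.1) (x : ℝ) : lv p q x = lv q p x := by
  unfold lv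
  have h1 : p.1 - q.1 ≠ 0 := sub_ne_zero.2 h
  have h2 : q.1 - p.1 ≠ 0 := sub_ne_zero.2 h.symm
  field_simp
  ring

lemma up_comm {s p q : ℝ × ℝ} (h : p.1 ≠ q.1) : up s p q = up s q p := by
  classical
  unfold up
  exact if_congr (by rw [lv_comm h, inr_comm p.1 q.1]) rfl rfl

lemma ab_comm {s p q : ℝ × ℝ} (h : p.1 ≠ q.1) : ab s p q = ab s q p := by
  classical
  unfold ab
  exact if_congr (by rw [lv_comm h, inr_comm p.1 q.1]) rfl rfl

lemma Disj.lv_ne {p q s t : ℝ × ℝ} (h : Disj p q s t) (hpq : p.1 < q.1) (hst : s.1 < t.1) {x : ℝ}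
    (h1 : p.1 ≤ x) (h2 : x ≤ q.1) (h3 : s.1 ≤ x) (h4 : x ≤ t.1) : lv p q x ≠ lv s t x := by
  intro e
  have a1 : 0 < q.1 - p.1 := by linarith
  have a2 : 0 < t.1 - s.1 := by linarith
  refine h ((x - p.1) / (q.1 - p.1)) ((x - s.1) / (t.1 - s.1)) (div_nonneg (by linarith) a1.le)
    ((div_le_one a1).2 (by linarith)) (div_nonneg (by linarith) a2.le)
    ((div_le_one a2).2 (by linarith)) ?_
  unfold lv at e
  ext
  · simp only [Prod.fst_add, Prod.smul_fst, Prod.fst_sub, smul_eq_mul]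
    field_simp
    ring
  · simp only [Prod.snd_add, Prod.smul_snd, Prod.snd_sub, smul_eq_mul]
    rw [div_mul_eq_mul_div, div_mul_eq_mul_div, ← mul_div_assoc', ← mul_div_assoc']
    exact e

lemma lv_self (p q : ℝ × ℝ) : lv p q p.1 = p.2 := by simp [lv]

lemma lv_self' {p q : ℝ × ℝ} (h : p.1 ≠ q.1) : lv p q q.1 = q.2 := by
  rw [lv_comm h, lv_self]

lemma Disj.sign {p q s t : ℝ × ℝ} (h : Disj p q s t) (hpq : p.1 < q.1) (hst : s.1 < t.1) :
    (∀ x, p.1 ≤ x → x ≤ q.1 → s.1 ≤ x → x ≤ t.1 → lv s t x < lv p q x) ∨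
    (∀ x, p.1 ≤ x → x ≤ q.1 → s.1 ≤ x → x ≤ t.1 → lv p q x < lv s t x) := by
  by_contra hcon
  push Not at hcon
  obtain ⟨⟨x, x1, x2, x3, x4, x5⟩, y, y1, y2, y3, y4, y5⟩ := hcon
  have hcont : Continuous fun z => lv p q z - lv s t z := by
    unfold lv
    fun_prop
  have := intermediate_value_uIcc (a := x) (b := y) hcont.continuousOn
  have h0 : (0 : ℝ) ∈ Set.uIcc (lv p q x - lv s t x) (lv p q y - lv s t y) := by
    rw [Set.mem_uIcc]
    left
    constructor <;> linarith
  obtain ⟨z, hz, hz0⟩ := this h0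
  rw [Set.mem_uIcc] at hz
  refine h.lv_ne hpq hst (x := z) ?_ ?_ ?_ ?_ (by dsimp only at hz0; linarith)
  all_goals rcases hz with hz | hz <;> linarith [hz.1, hz.2]

lemma par_aux {p q s t : ℝ × ℝ} (h : Disj p q s t) (hpq : p.1 < q.1) (hst : s.1 < t.1)
    (h1 : p.1 ≠ s.1) (h2 : p.1 ≠ t.1) (h3 : q.1 ≠ s.1) (h4 : q.1 ≠ t.1) :
    up s p q + up t p q = ab p s t + ab q s t := by
  have e1 : ∀ x, inr p.1 q.1 x ↔ p.1 < x ∧ x < q.1 := fun x => by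
    unfold inr
    constructor
    · rintro (h | h)
      · exact h
      · linarith [h.1, h.2]
    · exact Or.inl
  have e2 : ∀ x, inr s.1 t.1 x ↔ s.1 < x ∧ x < t.1 := fun x => by
    unfold inr
    constructor
    · rintro (h | h)
      · exact h
      · linarith [h.1, h.2]
    · exact Or.inl
  have ls := lv_self s t
  have lt := lv_self' hst.ne
  have lp := lv_self p q
  have lq := lv_self' hpq.ne
  unfold up ab
  simp only [e1, e2]
  rcases h.sign hpq hst with hs | hs
  · have us : (p.1 < s.1 ∧ s.1 < q.1) ∧ s.2 < lv p q s.1 ↔ p.1 < s.1 ∧ s.1 < q.1 :=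
      ⟨fun h => h.1, fun h => ⟨h, by
        have := hs s.1 h.1.le h.2.le le_rfl hst.le
        rwa [ls] at this⟩⟩
    have ut : (p.1 < t.1 ∧ t.1 < q.1) ∧ t.2 < lv p q t.1 ↔ p.1 < t.1 ∧ t.1 < q.1 :=
      ⟨fun h => h.1, fun h => ⟨h, by
        have := hs t.1 h.1.le h.2.le hst.le le_rfl
        rwa [lt] at this⟩⟩
    have up : (s.1 < p.1 ∧ p.1 < t.1) ∧ ¬ p.2 < lv s t p.1 ↔ s.1 < p.1 ∧ p.1 < t.1 :=
      ⟨fun h => h.1, fun h => ⟨h, by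
        have := hs p.1 le_rfl hpq.le h.1.le h.2.le
        rw [lp] at this
        exact this.not_gt⟩⟩
    have uq : (s.1 < q.1 ∧ q.1 < t.1) ∧ ¬ q.2 < lv s t q.1 ↔ s.1 < q.1 ∧ q.1 < t.1 :=
      ⟨fun h => h.1, fun h => ⟨h, by
        have := hs q.1 hpq.le le_rfl h.1.le h.2.le
        rw [lq] at this
        exact this.not_gt⟩⟩
    simp only [us, ut, up, uq]
    have z2 : (1 : ZMod 2) + 1 = 0 := by decide
    rcases lt_or_gt_of_ne h1 with a1 | a1 <;> rcases lt_or_gt_of_ne h2 with a2 | a2 <;>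
      rcases lt_or_gt_of_ne h3 with a3 | a3 <;> rcases lt_or_gt_of_ne h4 with a4 | a4 <;>
      first
        | (exfalso; linarith)
        | simp [a1, a2, a3, a4, a1.not_gt, a2.not_gt, a3.not_gt, a4.not_gt, z2]
  · have us : ¬ ((p.1 < s.1 ∧ s.1 < q.1) ∧ s.2 < lv p q s.1) := fun h => by
        have := hs s.1 h.1.1.le h.1.2.le le_rfl hst.le
        rw [ls] at this
        linarith [h.2]
    have ut : ¬ ((p.1 < t.1 ∧ t.1 < q.1) ∧ t.2 < lv p q t.1) := fun h => by
        have := hs t.1 h.1.1.le h.1.2.le hst.le le_rfl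
        rw [lt] at this
        linarith [h.2]
    have up : ¬ ((s.1 < p.1 ∧ p.1 < t.1) ∧ ¬ p.2 < lv s t p.1) := fun h => by
        have := hs p.1 le_rfl hpq.le h.1.1.le h.1.2.le
        rw [lp] at this
        exact h.2 this
    have uq : ¬ ((s.1 < q.1 ∧ q.1 < t.1) ∧ ¬ q.2 < lv s t q.1) := fun h => by
        have := hs q.1 hpq.le le_rfl h.1.1.le h.1.2.le
        rw [lq] at this
        exact h.2 this
    simp only [us, ut, up, uq, if_false]

lemma par {p q s t : ℝ × ℝ} (h : Disj p q s t) (hpq : p.1 ≠ q.1) (hst : s.1 ≠ t.1)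
    (h1 : p.1 ≠ s.1) (h2 : p.1 ≠ t.1) (h3 : q.1 ≠ s.1) (h4 : q.1 ≠ t.1) :
    up s p q + up t p q = ab p s t + ab q s t := by
  rcases lt_or_gt_of_ne hpq with a | a <;> rcases lt_or_gt_of_ne hst with b | b
  · exact par_aux h a b h1 h2 h3 h4
  · have := par_aux h.symm.swap.symm a b h2 h1 h4 h3
    rw [ab_comm hst, ab_comm hst, ← this, add_comm]
  · have := par_aux h.swap a b h3 h4 h1 h2
    rw [up_comm hpq, up_comm hpq, this, add_comm]
  · have := par_aux h.swap.symm.swap.symm a b h4 h3 h2 h1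
    rw [up_comm hpq, up_comm hpq, ab_comm hst, ab_comm hst, add_comm, this, add_comm]

lemma up_add_ab (s p q : ℝ × ℝ) [Decidable (inr p.1 q.1 s.1)] :
    up s p q + ab s p q = if inr p.1 q.1 s.1 then 1 else 0 := by
  unfold up ab
  by_cases h : inr p.1 q.1 s.1 <;> by_cases h' : s.2 < lv p q s.1 <;> simp [h, h']

lemma up_zero {s p q : ℝ × ℝ} (h : ¬ inr p.1 q.1 s.1) : up s p q = 0 := by
  unfold up; simp [h]

lemma ab_zero {s p q : ℝ × ℝ} (h : ¬ inr p.1 q.1 s.1) : ab s p q = 0 := by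
  unfold ab; simp [h]

variable {V : Type} {H : SimpleGraph V}

theorem geo {P E : V → ℝ × ℝ} {O : Set V} (hx : ∀ u v, u ≠ v → (P u).1 ≠ (P v).1)
    (hE : ∀ v ∈ O, (∀ u, (P u).1 < (E v).1) ∨ (∀ u, (E v).1 < (P u).1))
    (hseg : ∀ p q s t, H.Adj p q → H.Adj s t → p ≠ s → p ≠ t → q ≠ s → q ≠ t →
      Disj (P p) (P q) (P s) (P t))
    (hray : ∀ a ∈ O, ∀ s t, H.Adj s t → a ≠ s → a ≠ t → Disj (P a) (E a) (P s) (P t)) :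
    ∃ L : V → V → ZMod 2, (∀ a ∈ O, ∀ b ∈ O, a ≠ b → L a b + L b a = 1) ∧
    (∀ A B, Conn H A → Conn H B → Disjoint A B → ∀ a ∈ O, ∀ b ∈ O, ∀ c ∈ O, ∀ d ∈ O,
      a ∈ A → c ∈ A → b ∈ B → d ∈ B → L a b + L c b + L a d + L c d = 0) := by
  classical
  have z2 : ∀ x : ZMod 2, x + x = 0 := by decide
  have hEne : ∀ v ∈ O, ∀ u, (P u).1 ≠ (E v).1 := by
    intro v hv u
    rcases hE v hv with h | h
    · exact (h u).ne
    · exact (h u).ne'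
  have hEout : ∀ v ∈ O, ∀ s t, ¬ inr (P s).1 (P t).1 (E v).1 := by
    rintro v hv s t (h' | h')
    · rcases hE v hv with h | h
      · linarith [h t, h'.2]
      · linarith [h s, h'.1]
    · rcases hE v hv with h | h
      · linarith [h s, h'.2]
      · linarith [h t, h'.1]
  let M : V → V → ZMod 2 := fun a b => up (P b) (P a) (E a) + ab (P a) (P b) (E b)
  let side : V → ZMod 2 := fun a => if (P a).1 < (E a).1 then 1 else 0
  refine ⟨fun a b => M a b + side b, ?_, ?_⟩
  · intro a ha b hb hab
    have key : M a b + M b a = (if inr (P a).1 (E a).1 (P b).1 then 1 else 0) +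
        (if inr (P b).1 (E b).1 (P a).1 then 1 else 0) := by
      rw [← up_add_ab, ← up_add_ab]
      simp only [M]
      ring
    have : M a b + side b + (M b a + side a) = (M a b + M b a) + (side a + side b) := by ring
    rw [this, key]
    simp only [side]
    have hne := hx a b hab
    have k1 : (inr (P a).1 (E a).1 (P b).1) ↔ ((P a).1 < (P b).1 ↔ (P a).1 < (E a).1) := by
      unfold inr
      rcases hE a ha with h | h
      · have h1 := h a
        have h2 := h b
        simp [h1, h2, h1.not_gt, h2.not_gt]
      · have h1 := h a
        have h2 := h b
        simp only [h1, h2, h1.not_gt, h2.not_gt]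
        rcases lt_or_gt_of_ne hne with g | g
        · simp [g, g.not_gt]
        · simp [g, g.not_gt]
    have k2 : (inr (P b).1 (E b).1 (P a).1) ↔ ((P b).1 < (P a).1 ↔ (P b).1 < (E b).1) := by
      unfold inr
      rcases hE b hb with h | h
      · have h1 := h a
        have h2 := h b
        simp [h1, h2, h1.not_gt, h2.not_gt]
      · have h1 := h a
        have h2 := h b
        simp only [h1, h2, h1.not_gt, h2.not_gt]
        rcases lt_or_gt_of_ne hne with g | g
        · simp [g, g.not_gt]
        · simp [g, g.not_gt]
    simp only [k1, k2]
    rcases lt_or_gt_of_ne hne with g | g <;> by_cases ga : (P a).1 < (E a).1 <;>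
      by_cases gb : (P b).1 < (E b).1 <;> simp [g, g.not_gt, ga, gb] <;> decide
  · intro A B hA hB hdis a ha b hb c hc d hd haA hcA hbB hdB
    rw [Set.disjoint_left] at hdis
    have hstep : ∀ c ∈ A, ∃ φ : V → ZMod 2,
        (∀ s t, H.Adj s t → s ∉ A → t ∉ A → φ s + φ t = ab (P a) (P s) (P t) + ab (P c) (P s) (P t)) ∧
        (∀ b ∈ O, b ∉ A → φ b = ab (P a) (P b) (E b) + ab (P c) (P b) (E b)) := by
      have hsub := hA.2 {c | c ∈ A ∧ ∃ φ : V → ZMod 2,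
        (∀ s t, H.Adj s t → s ∉ A → t ∉ A → φ s + φ t = ab (P a) (P s) (P t) + ab (P c) (P s) (P t)) ∧
        (∀ b ∈ O, b ∉ A → φ b = ab (P a) (P b) (E b) + ab (P c) (P b) (E b))} (fun x hx => hx.1)
        ⟨a, haA, fun _ => 0, fun s t _ _ _ => by rw [z2, z2], fun b _ _ => by rw [z2]⟩ ?_
      · exact fun c hc => (hsub hc).2
      rintro x ⟨hxA, φ, h1, h2⟩ y hyA hxy
      refine ⟨hyA, fun v => φ v + up (P v) (P x) (P y), ?_, ?_⟩
      · intro s t hst hs ht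
        have xs : x ≠ s := by rintro rfl; exact hs hxA
        have xt : x ≠ t := by rintro rfl; exact ht hxA
        have ys : y ≠ s := by rintro rfl; exact hs hyA
        have yt : y ≠ t := by rintro rfl; exact ht hyA
        have := par (hseg x y s t hxy hst xs xt ys yt) (hx _ _ hxy.ne) (hx _ _ hst.ne) (hx _ _ xs)
          (hx _ _ xt) (hx _ _ ys) (hx _ _ yt)
        linear_combination h1 s t hst hs ht + this + z2 (ab (P x) (P s) (P t))
      · intro b hb hbA
        have xb : x ≠ b := by rintro rfl; exact hbA hxA
        have yb : y ≠ b := by rintro rfl; exact hbA hyA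
        have := par (hray b hb x y hxy xb.symm yb.symm).symm (hx _ _ hxy.ne) (hEne b hb b) (hx _ _ xb)
          (hEne b hb x) (hx _ _ yb) (hEne b hb y)
        rw [up_zero (hEout b hb x y)] at this
        linear_combination h2 b hb hbA + this + z2 (ab (P x) (P b) (E b))
    obtain ⟨φ, h1, h2⟩ := hstep c hcA
    let f : V → ZMod 2 := fun v => φ v + up (P v) (P a) (E a) + up (P v) (P c) (E c)
    have hrayp : ∀ a ∈ O, ∀ s t, H.Adj s t → a ≠ s → a ≠ t →
        up (P s) (P a) (E a) + up (P t) (P a) (E a) = ab (P a) (P s) (P t) := by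
      intro a ha s t hst as at'
      have := par (hray a ha s t hst as at') (hEne a ha a) (hx _ _ hst.ne) (hx _ _ as) (hx _ _ at')
        (hEne a ha s).symm (hEne a ha t).symm
      rw [ab_zero (hEout a ha s t), add_zero] at this
      exact this
    have hf : B ⊆ {x | x ∈ B ∧ f x = f b} := by
      refine hB.2 _ (fun x hx => hx.1) ⟨b, hbB, rfl⟩ ?_
      rintro s ⟨hsB, hs⟩ t htB hst
      refine ⟨htB, ?_⟩
      rw [← hs]
      have hsA : s ∉ A := fun h => hdis h hsB
      have htA : t ∉ A := fun h => hdis h htB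
      have e1 := h1 s t hst hsA htA
      have e2 := hrayp a ha s t hst (by rintro rfl; exact hsA haA) (by rintro rfl; exact htA haA)
      have e3 := hrayp c hc s t hst (by rintro rfl; exact hsA hcA) (by rintro rfl; exact htA hcA)
      have e4 : f s + f t = 0 := by
        simp only [f]
        linear_combination e1 + e2 + e3 + z2 (ab (P a) (P s) (P t)) + z2 (ab (P c) (P s) (P t))
      linear_combination e4 - z2 (f s)
    have hfd := (hf hdB).2
    have eb := h2 b hb (fun h => hdis h hbB)
    have ed := h2 d hd (fun h => hdis h hdB)
    simp only [f] at hfd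
    rw [eb, ed] at hfd
    simp only [M]
    have q1 := z2 (side b)
    have q2 := z2 (side d)
    have q3 := z2 (up (P b) (P a) (E a) + ab (P a) (P b) (E b) + up (P b) (P c) (E c) + ab (P c) (P b) (E b))
    linear_combination hfd + q1 + q2 + q3

lemma exists_eps {S : Set (ℝ × ℝ)} (hS : S.Finite) (h0 : ∀ w ∈ S, w ≠ 0) :
    ∃ ε : ℝ, ∀ w ∈ S, w.1 + ε * w.2 ≠ 0 := by
  obtain ⟨ε, hε⟩ := (hS.image (fun w => -w.1 / w.2)).infinite_compl.nonempty
  refine ⟨ε, fun w hw e => ?_⟩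
  by_cases h2 : w.2 = 0
  · apply h0 w hw
    ext
    · simpa [h2] using e
    · exact h2
  · apply hε
    refine ⟨w, hw, ?_⟩
    field_simp
    linarith

theorem main_step [Finite V] {G : SimpleGraph V} (emb : StraightEmbedding G) {n : ℕ}
    (hW : W G n {v | ¬ OnOuterFace emb v} ∅) : W G (n + 3) Set.univ ∅ := by
  classical
  let O : Set V := {v | OnOuterFace emb v}
  have hd' : ∀ v, ∃ d : ℝ × ℝ, v ∈ O → (d ≠ 0 ∧ ∀ t : ℝ, 0 < t → ∀ a b : V, G.Adj a b →
    emb.pos v + t • d ∉ segment ℝ (emb.pos a) (emb.pos b)) := by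
    intro v
    by_cases hv : v ∈ O
    · obtain ⟨d, hd⟩ := hv
      exact ⟨d, fun _ => hd⟩
    · exact ⟨0, fun h => absurd h hv⟩
  choose d hd using hd'
  obtain ⟨ε, hε⟩ := exists_eps (S := {w | ∃ u v, u ≠ v ∧ w = emb.pos u - emb.pos v} ∪ d '' O)
    (by
      refine Set.Finite.union ?_ (Set.toFinite _)
      refine (Set.finite_range fun p : V × V => emb.pos p.1 - emb.pos p.2).subset ?_
      rintro w ⟨u, v, -, rfl⟩
      exact ⟨(u, v), rfl⟩)
    (by
      rintro w (⟨u, v, huv, rfl⟩ | ⟨v, hv, rfl⟩)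
      · exact sub_ne_zero.2 fun e => huv (emb.inj e)
      · exact (hd v hv).1)
  let sh : ℝ × ℝ → ℝ × ℝ := fun p => (p.1 + ε * p.2, p.2)
  have hsh : ∀ p q s t : ℝ × ℝ, (∀ x, x ∈ segment ℝ p q → x ∉ segment ℝ s t) →
      Disj (sh p) (sh q) (sh s) (sh t) := by
    intro p q s t h α β h1 h2 h3 h4 e
    refine h (p + α • (q - p)) ?_ ?_
    · rw [segment_eq_image']
      exact ⟨α, ⟨h1, h2⟩, rfl⟩
    · rw [segment_eq_image']
      refine ⟨β, ⟨h3, h4⟩, ?_⟩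
      have e1 := congrArg Prod.fst e
      have e2 := congrArg Prod.snd e
      simp only [sh, Prod.fst_add, Prod.smul_fst, Prod.fst_sub, Prod.snd_add, Prod.smul_snd,
        Prod.snd_sub, smul_eq_mul] at e1 e2
      ext
      · simp only [Prod.fst_add, Prod.smul_fst, Prod.fst_sub, smul_eq_mul]
        linear_combination -e1 + ε * e2
      · simp only [Prod.snd_add, Prod.smul_snd, Prod.snd_sub, smul_eq_mul]
        exact e2.symm
  let X : V → ℝ := fun v => (emb.pos v).1 + ε * (emb.pos v).2
  obtain ⟨K, hK⟩ : ∃ K, ∀ p : V × V, |X p.1 - X p.2| ≤ K := by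
    obtain ⟨K, hK⟩ := (Set.finite_range fun p : V × V => |X p.1 - X p.2|).bddAbove
    exact ⟨K, fun p => hK ⟨p, rfl⟩⟩
  let D : V → ℝ := fun v => (d v).1 + ε * (d v).2
  have hD : ∀ v ∈ O, D v ≠ 0 := fun v hv => hε _ (Or.inr ⟨v, hv, rfl⟩)
  let T : V → ℝ := fun v => (|K| + 1) / |D v|
  have hT : ∀ v ∈ O, 0 < T v := fun v hv => div_pos (by positivity) (abs_pos.2 (hD v hv))
  refine Exists.elim (geo (H := G) (P := fun v => sh (emb.pos v))
    (E := fun v => sh (emb.pos v + T v • d v)) (O := O) ?_ ?_ ?_ ?_) ?_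
  · intro u v huv e
    apply hε _ (Or.inl ⟨u, v, huv, rfl⟩)
    simp only [sh] at e
    simp only [Prod.fst_sub, Prod.snd_sub]
    linarith
  · intro v hv
    have hTD : T v * |D v| = |K| + 1 := div_mul_cancel₀ _ (abs_pos.2 (hD v hv)).ne'
    have hEx : (sh (emb.pos v + T v • d v)).1 = X v + T v * D v := by
      simp only [sh, X, D, Prod.fst_add, Prod.smul_fst, Prod.snd_add, Prod.smul_snd, smul_eq_mul]
      ring
    have hPx : ∀ u, (sh (emb.pos u)).1 = X u := fun u => rfl
    simp only [hEx, hPx]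
    rcases lt_or_gt_of_ne (hD v hv) with h | h
    · right
      intro u
      rw [abs_of_neg h] at hTD
      have h1 := hK (v, u)
      have h2 := le_abs_self (X v - X u)
      have h3 := le_abs_self K
      dsimp only at h1
      linarith
    · left
      intro u
      rw [abs_of_pos h] at hTD
      have h1 := hK (u, v)
      have h2 := le_abs_self (X u - X v)
      have h3 := le_abs_self K
      dsimp only at h1
      linarith
  · intro p q s t hpq hst h1 h2 h3 h4
    apply hsh
    intro x hx hx'
    have hne : (s(p, q) : Sym2 V) ≠ s(s, t) := by
      intro e
      rw [Sym2.eq_iff] at e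
      tauto
    obtain ⟨v, ⟨hv, hv'⟩, -⟩ := emb.no_cross p q s t hpq hst hne ⟨hx, hx'⟩
    simp only [Set.mem_insert_iff, Set.mem_singleton_iff] at hv hv'
    rcases hv with rfl | rfl <;> tauto
  · intro a ha s t hst has hat
    apply hsh
    intro x hx hx'
    rw [segment_eq_image'] at hx
    obtain ⟨θ, ⟨h0, h1⟩, rfl⟩ := hx
    rcases h0.eq_or_lt with h0 | h0
    · subst h0
      apply emb.vertex_off_edge a s t hst has hat
      simpa using hx'
    · apply (hd a ha).2 (θ * T a) (mul_pos h0 (hT a ha)) s t hst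
      convert hx' using 1
      simp [mul_smul]
  · rintro L ⟨hL1, hL2⟩
    refine main_abs L hL1 hL2 n _ Set.univ (Nat.lt_succ_self _) (hW.congr ?_ rfl)
    ext x
    simp [O]

theorem kouter_W : ∀ (k : ℕ) (V : Type) [Finite V] (G : SimpleGraph V), IsKOuterplanar k V G →
    W G (3 * k) Set.univ ∅
  | 0, _, _, _, h => by simp [IsKOuterplanar] at h
  | 1, V, _, G, h => by
    obtain ⟨emb, hemb⟩ := h
    refine main_step (n := 0) emb ((W.nil ∅).congr ?_ rfl)
    ext v
    simp [hemb v]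
  | (k + 2), V, _, G, h => by
    obtain ⟨emb, hemb⟩ := h
    have h1 := kouter_W (k + 1) _ _ hemb
    have h2 := h1.map_induce
    refine main_step (n := 3 * (k + 1)) emb (h2.congr ?_ ?_)
    · simp
    · simp

end geo
end KO

/-- every `k`-outerplanar graph has treewidth at most `3k - 1`. -/
theorem kOuterplanar_treewidth {V : Type} [Fintype V] (G : SimpleGraph V) (k : ℕ)
    (h : IsKOuterplanar k V G) : TreewidthLE G (3 * k - 1) := by
  obtain ⟨ι, D, hD⟩ := (KO.kouter_W k V G h).treewidth
  refine ⟨ι, D, fun t => ?_⟩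
  have hk : k ≠ 0 := by rintro rfl; exact h
  have := hD t
  omega
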